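/- arXiv:0712.1514 — 2 statements merged into one kernel-verified Lean document; each statement's English description precedes it below -/
import Mathlib

section
/- There exists a constant C₀ > 0 such that for all b, λ with 0 < b < λ, all rectangles Ω_R = (-R₁/2, R₁/2) × (-R₂/2, R₂/2) with 1 ≤ √b · min(R₁, R₂), and all ε ∈ (0, 1]: (1 - ε)² (b |Ω_R| / 2π) · #{ n ∈ ℕ : (2n+1)b < λ - C₀/(ε · min(R₁,R₂))² } ≤ N(λ; q_b, Ω_R). -/
open MeasureTheory Real Filter

noncomputable section

/-- The upper half-plane ℍ as a subset of ℝ². -/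
def UHP : Set (ℝ × ℝ) := {p : ℝ × ℝ | 0 < p.2}

/-- The hyperbolic measure `dv = y⁻² dx dy` on ℍ. -/
def volH : Measure (ℝ × ℝ) :=
  (volume.restrict UHP).withDensity fun p => ENNReal.ofReal ((p.2 ^ 2)⁻¹)

/-- x-derivative of a complex function on ℝ². -/
def dX (f : ℝ × ℝ → ℂ) (p : ℝ × ℝ) : ℂ := fderiv ℝ f p (1, 0)

/-- y-derivative of a complex function on ℝ². -/
def dY (f : ℝ × ℝ → ℂ) (p : ℝ × ℝ) : ℂ := fderiv ℝ f p (0, 1)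

/-- x-derivative of a real function on ℝ². -/
def dXr (f : ℝ × ℝ → ℝ) (p : ℝ × ℝ) : ℝ := fderiv ℝ f p (1, 0)

/-- y-derivative of a real function on ℝ². -/
def dYr (f : ℝ × ℝ → ℝ) (p : ℝ × ℝ) : ℝ := fderiv ℝ f p (0, 1)

/-- The magnetic field `b̃ = y² (∂ₓA₂ - ∂_yA₁)`. -/
def fieldB (A₁ A₂ : ℝ × ℝ → ℝ) (p : ℝ × ℝ) : ℝ := p.2 ^ 2 * (dXr A₂ p - dYr A₁ p)

/-- The magnetic intensity `b = |b̃|`. -/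
def intenB (A₁ A₂ : ℝ × ℝ → ℝ) (p : ℝ × ℝ) : ℝ := |fieldB A₁ A₂ p|

/-- Smooth compactly supported test functions with support inside a set `Ω`. -/
def IsTestOn (Ω : Set (ℝ × ℝ)) (f : ℝ × ℝ → ℂ) : Prop :=
  ContDiff ℝ (⊤ : ℕ∞) f ∧ HasCompactSupport f ∧ tsupport f ⊆ Ω

/-- The quadratic form of the magnetic Laplacian on ℍ. -/
def qA (A₁ A₂ : ℝ × ℝ → ℝ) (f : ℝ × ℝ → ℂ) : ℝ :=
  ∫ p, p.2 ^ 2 * (‖-Complex.I * dX f p - (A₁ p : ℂ) * f p‖ ^ 2 +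
    ‖-Complex.I * dY f p - (A₂ p : ℂ) * f p‖ ^ 2) ∂volH

/-- hyperbolic distance from `(x,y)` to `(0,1)`. -/
def hDist (p : ℝ × ℝ) : ℝ :=
  2 * Real.arsinh (Real.sqrt (p.1 ^ 2 + (p.2 - 1) ^ 2) / (2 * Real.sqrt p.2))

/-- (H1) : the magnetic intensity tends to +∞ at infinity. -/
def H1 (A₁ A₂ : ℝ × ℝ → ℝ) : Prop :=
  ∀ M : ℝ, ∃ R : ℝ, ∀ p ∈ UHP, R ≤ hDist p → M ≤ intenB A₁ A₂ p

/-- (H2) : control of the derivative of the magnetic field. -/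
def H2 (C₀ : ℝ) (A₁ A₂ : ℝ × ℝ → ℝ) : Prop :=
  ∀ p ∈ UHP, p.2 * Real.sqrt ((dXr (fieldB A₁ A₂) p) ^ 2 + (dYr (fieldB A₁ A₂) p) ^ 2)
    ≤ C₀ * (intenB A₁ A₂ p + 1)

/-- Counting function of a quadratic form `q` with form domain `dom` and squared
norm `nsq`, via Glazman's lemma. -/
def NN (q : (ℝ × ℝ → ℂ) → ℝ) (dom : Set (ℝ × ℝ → ℂ)) (nsq : (ℝ × ℝ → ℂ) → ℝ)
    (lam : ℝ) : ℕ :=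
  sSup {n : ℕ | ∃ V : Submodule ℂ (ℝ × ℝ → ℂ), (V : Set (ℝ × ℝ → ℂ)) ⊆ dom ∧
    Module.finrank ℂ V = n ∧ ∀ u ∈ V, u ≠ 0 → q u < lam * nsq u}

/-- Heaviside function `[ρ]₊⁰`. -/
def heav (ρ : ℝ) : ℝ := if 0 < ρ then 1 else 0


/-- The quadratic form of the Landau Hamiltonian with constant field `b` on ℝ². -/
def qb (b : ℝ) (u : ℝ × ℝ → ℂ) : ℝ :=
  ∫ p : ℝ × ℝ, (‖-Complex.I * dX u p - ((b * p.2 / 2 : ℝ) : ℂ) * u p‖ ^ 2 +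
    ‖-Complex.I * dY u p + ((b * p.1 / 2 : ℝ) : ℂ) * u p‖ ^ 2)

/-- Dirichlet eigenvalue counting function of the Landau Hamiltonian on `Ω`. -/
def NNb (b lam : ℝ) (Ω : Set (ℝ × ℝ)) : ℕ :=
  NN (qb b) {u | IsTestOn Ω u} (fun u => ∫ p : ℝ × ℝ, ‖u p‖ ^ 2) lam

/-- Number of Landau levels below `lam` : `#{n ∈ ℕ : (2n+1)b < lam}`. -/
def landauCount (b lam : ℝ) : ℕ := Nat.card {n : ℕ | (2 * (n : ℝ) + 1) * b < lam}

/-- The open rectangle `(-R₁/2, R₁/2) × (-R₂/2, R₂/2)`. -/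
def rectR (R₁ R₂ : ℝ) : Set (ℝ × ℝ) :=
  Set.Ioo (-R₁ / 2) (R₁ / 2) ×ˢ Set.Ioo (-R₂ / 2) (R₂ / 2)


open Polynomial in
/-- Gaussian functional -/
def Lam (b : ℝ) (R : ℂ[X]) : ℂ := ∫ y : ℝ, R.eval (y : ℂ) * (Real.exp (-b * y ^ 2) : ℂ)

open Polynomial in
theorem lam_integrable {b : ℝ} (hb : 0 < b) (R : ℂ[X]) :
    Integrable (fun y : ℝ => R.eval (y : ℂ) * (Real.exp (-b * y ^ 2) : ℂ)) := by
  induction R using Polynomial.induction_on' with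
  | add p q hp hq =>
    simp only [Polynomial.eval_add, add_mul]
    exact hp.add hq
  | monomial n a =>
    have h := integrable_rpow_mul_exp_neg_mul_sq hb (s := (n : ℝ)) (by
      have : (0 : ℝ) ≤ n := Nat.cast_nonneg n
      linarith)
    have h2 := (h.ofReal (𝕜 := ℂ)).const_mul a
    refine h2.congr (Filter.Eventually.of_forall fun y => ?_)
    simp [Polynomial.eval_monomial, mul_assoc]

open Polynomial in
theorem lam_add {b : ℝ} (hb : 0 < b) (R S : ℂ[X]) : Lam b (R + S) = Lam b R + Lam b S := by
  unfold Lam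
  rw [← integral_add (lam_integrable hb R) (lam_integrable hb S)]
  simp only [Polynomial.eval_add, add_mul]

open Polynomial in
theorem lam_smul {b : ℝ} (a : ℂ) (R : ℂ[X]) : Lam b (C a * R) = a * Lam b R := by
  unfold Lam
  rw [← integral_const_mul]
  simp only [Polynomial.eval_mul, Polynomial.eval_C, mul_assoc]

open Polynomial in
theorem lam_sub {b : ℝ} (hb : 0 < b) (R S : ℂ[X]) : Lam b (R - S) = Lam b R - Lam b S := by
  unfold Lam
  rw [← integral_sub (lam_integrable hb R) (lam_integrable hb S)]
  simp only [Polynomial.eval_sub, sub_mul]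

open Polynomial in
theorem lam_deriv {b : ℝ} (hb : 0 < b) (R : ℂ[X]) :
    Lam b (derivative R) = 2 * b * Lam b (X * R) := by
  have hd : ∀ y : ℝ, HasDerivAt (fun y : ℝ => R.eval (y : ℂ) * (Real.exp (-b * y ^ 2) : ℂ))
      ((derivative R - C (2 * b : ℂ) * (X * R)).eval (y : ℂ) * (Real.exp (-b * y ^ 2) : ℂ)) y := by
    intro y
    have h1 : HasDerivAt (fun y : ℝ => R.eval (y : ℂ)) ((derivative R).eval (y : ℂ)) y := by
      exact (R.hasDerivAt (y : ℂ)).comp_ofReal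
    have h2 : HasDerivAt (fun y : ℝ => Real.exp (-b * y ^ 2)) (Real.exp (-b * y ^ 2) * (-b * (2 * y))) y := by
      have := (((hasDerivAt_id y).pow 2).const_mul (-b)).exp
      simpa using this
    have h3 := h1.mul h2.ofReal_comp
    refine h3.congr_deriv ?_
    simp only [Polynomial.eval_sub, Polynomial.eval_mul, Polynomial.eval_C, Polynomial.eval_X]
    push_cast
    ring
  have := integral_eq_zero_of_hasDerivAt_of_integrable hd (lam_integrable hb _) (lam_integrable hb R)
  change Lam b _ = 0 at this
  rw [lam_sub hb, lam_smul] at this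
  exact sub_eq_zero.mp this

open Polynomial in
/-- conjugate polynomial -/
def cj (R : ℂ[X]) : ℂ[X] := R.map (starRingEnd ℂ)

open Polynomial in
theorem cj_eval (R : ℂ[X]) (y : ℝ) : (cj R).eval (y : ℂ) = (starRingEnd ℂ) (R.eval (y : ℂ)) := by
  unfold cj
  rw [Polynomial.eval_map]
  have := Polynomial.hom_eval₂ R (RingHom.id ℂ) (starRingEnd ℂ) (y : ℂ)
  simp only [RingHom.comp_id, Complex.conj_ofReal] at this
  rw [← this]; rfl

open Polynomial in
/-- gaussian norm -/
def Gam (b : ℝ) (P : ℂ[X]) : ℝ := ∫ y : ℝ, ‖P.eval (y : ℂ)‖ ^ 2 * Real.exp (-b * y ^ 2)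

open Polynomial in
theorem lam_gam (b : ℝ) (P : ℂ[X]) : Lam b (P * cj P) = (Gam b P : ℂ) := by
  unfold Lam Gam
  rw [← integral_complex_ofReal]
  congr 1; ext y
  rw [Polynomial.eval_mul, cj_eval, Complex.mul_conj, Complex.normSq_eq_norm_sq]
  push_cast; rfl

open Polynomial in
theorem gam_nonneg (b : ℝ) (P : ℂ[X]) : 0 ≤ Gam b P :=
  integral_nonneg fun y => by positivity

open Polynomial in
theorem gam_integrable {b : ℝ} (hb : 0 < b) (P : ℂ[X]) :
    Integrable (fun y : ℝ => ‖P.eval (y : ℂ)‖ ^ 2 * Real.exp (-b * y ^ 2)) := by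
  have := (lam_integrable hb (P * cj P)).re
  refine this.congr (Filter.Eventually.of_forall fun y => ?_)
  simp only [Polynomial.eval_mul, cj_eval, Complex.mul_conj, Complex.normSq_eq_norm_sq]
  rw [← Complex.ofReal_mul]
  exact Complex.ofReal_re _

open Polynomial in
theorem gam_pos {b : ℝ} (hb : 0 < b) (P : ℂ[X]) (hP : P ≠ 0) : 0 < Gam b P := by
  unfold Gam
  have hc : Continuous (fun y : ℝ => ‖P.eval (y : ℂ)‖ ^ 2 * Real.exp (-b * y ^ 2)) := by fun_prop
  obtain ⟨y, hy⟩ : ∃ y : ℝ, P.eval (y : ℂ) ≠ 0 := by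
    by_contra! h
    apply hP
    apply Polynomial.eq_zero_of_infinite_isRoot
    refine Set.Infinite.mono ?_ (Set.infinite_range_of_injective Complex.ofReal_injective)
    rintro _ ⟨y, rfl⟩
    exact h y
  refine integral_pos_of_integrable_nonneg_nonzero (x := y) hc (gam_integrable hb P) (fun y => by positivity) ?_
  have := norm_pos_iff.mpr hy
  positivity

open Polynomial in
theorem gam_cj_deriv (P : ℂ[X]) : derivative (cj P) = cj (derivative P) := by
  unfold cj; rw [Polynomial.derivative_map]

open Polynomial in
/-- adjoint of the derivative -/
theorem lam_adj {b : ℝ} (hb : 0 < b) (q r : ℂ[X]) :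
    Lam b ((C (2 * b : ℂ) * (X * q) - derivative q) * r) = Lam b (q * derivative r) := by
  have h := lam_deriv hb (q * r)
  rw [derivative_mul, lam_add hb, ← lam_smul] at h
  have e : (C (2 * b : ℂ) * (X * q) - derivative q) * r
    = C (2 * b : ℂ) * (X * (q * r)) - derivative q * r := by ring
  rw [e, lam_sub hb, ← h]; ring

open Polynomial in
theorem gam_astar {b : ℝ} (hb : 0 < b) (q : ℂ[X]) :
    Gam b (C (2 * b : ℂ) * (X * q) - derivative q) = Gam b (derivative q) + 2 * b * Gam b q := by
  have hc : cj (C (2 * b : ℂ) * (X * q) - derivative q)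
      = C (2 * b : ℂ) * (X * cj q) - derivative (cj q) := by
    rw [gam_cj_deriv]; simp [cj, Polynomial.map_sub, Polynomial.map_mul, map_ofNat]
  have h : (Gam b (C (2 * b : ℂ) * (X * q) - derivative q) : ℂ)
      = Gam b (derivative q) + 2 * b * Gam b q := by
    rw [← lam_gam, ← lam_gam, ← lam_gam, lam_adj hb, hc]
    have e : q * derivative (C (2 * b : ℂ) * (X * cj q) - derivative (cj q))
      = C (2 * b : ℂ) * (q * cj q)
        + (C (2 * b : ℂ) * (X * derivative (cj q)) - derivative (derivative (cj q))) * q := by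
      simp only [derivative_sub, derivative_mul, derivative_C, derivative_X]
      ring
    rw [e, lam_add hb, lam_smul, lam_adj hb, gam_cj_deriv, mul_comm (cj _) (derivative q)]
    ring
  exact_mod_cast h

open Polynomial in
theorem gam_deriv_le {b : ℝ} (hb : 0 < b) (n : ℕ) : ∀ P : ℂ[X], P.natDegree ≤ n →
    Gam b (derivative P) ≤ 2 * b * n * Gam b P := by
  induction n with
  | zero =>
    intro P hP
    have : derivative P = 0 := Polynomial.derivative_of_natDegree_zero (Nat.le_zero.mp hP)
    simp [this, Gam]
  | succ n ih =>
    intro P hP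
    set q := derivative P with hq
    have hqd : q.natDegree ≤ n := by
      have := Polynomial.natDegree_derivative_le P
      rw [← hq] at this
      omega
    have h1 := ih q hqd
    have h2 := gam_astar hb q
    set t : ℝ := 2 * b * (n + 1) with ht
    have htp : 0 < t := by positivity
    -- expand the square
    set a := C (2 * b : ℂ) * (X * q) - derivative q with ha
    have h3 : (Gam b (a - C (t : ℂ) * P) : ℂ) = Gam b a - 2 * t * Gam b q + t ^ 2 * Gam b P := by
      have hcP : cj (a - C (t : ℂ) * P) = cj a - C (t : ℂ) * cj P := by
        simp [cj, Polynomial.map_sub, Polynomial.map_mul]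
      have hca : cj a = C (2 * b : ℂ) * (X * cj q) - derivative (cj q) := by
        rw [gam_cj_deriv, ha]; simp [cj, Polynomial.map_sub, Polynomial.map_mul, map_ofNat]
      have e1 : Lam b (a * cj P) = Gam b q := by
        rw [ha, lam_adj hb, gam_cj_deriv, ← hq, lam_gam]
      have e2 : Lam b (cj a * P) = Gam b q := by
        rw [hca, lam_adj hb, ← hq, mul_comm, lam_gam]
      have e : (a - C (t : ℂ) * P) * (cj a - C (t : ℂ) * cj P)
        = a * cj a - C (t : ℂ) * (a * cj P) - C (t : ℂ) * (cj a * P)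
          + C (t : ℂ) * (C (t : ℂ) * (P * cj P)) := by ring
      rw [← lam_gam, hcP, e, lam_add hb, lam_sub hb, lam_sub hb, lam_smul, lam_smul, lam_smul,
        lam_smul, e1, e2, lam_gam, lam_gam]
      ring
    have h3' : Gam b (a - C (t : ℂ) * P) = Gam b a - 2 * t * Gam b q + t ^ 2 * Gam b P := by
      exact_mod_cast h3
    have h4 := gam_nonneg b (a - C (t : ℂ) * P)
    have h5 : Gam b a ≤ t * Gam b q := by rw [h2, ht]; linarith
    have h6 : 0 ≤ t * (t * Gam b P - Gam b q) := by nlinarith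
    have h7 := nonneg_of_mul_nonneg_right h6 htp
    push_cast
    rw [ht] at h7
    linarith

open Polynomial in
theorem gam_energy {b : ℝ} (hb : 0 < b) (n : ℕ) (P : ℂ[X]) (hP : P.natDegree ≤ n) :
    Gam b (derivative P - C (b : ℂ) * (X * P)) + b ^ 2 * Gam b (X * P)
      ≤ (2 * n + 1) * b * Gam b P := by
  have h1 := gam_deriv_le hb n P hP
  have h : (Gam b (derivative P - C (b : ℂ) * (X * P)) : ℂ) + b ^ 2 * Gam b (X * P)
      = Gam b (derivative P) + b * Gam b P := by
    have hc : cj (derivative P - C (b : ℂ) * (X * P)) = derivative (cj P) - C (b : ℂ) * (X * cj P) := by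
      rw [gam_cj_deriv]; simp [cj, Polynomial.map_sub, Polynomial.map_mul]
    have hcX : cj (X * P) = X * cj P := by simp [cj]
    have h2 := lam_deriv hb (X * (P * cj P))
    have e0 : derivative (X * (P * cj P)) = P * cj P + X * derivative (P * cj P) := by
      simp only [derivative_mul, derivative_X]; ring
    rw [e0, lam_add hb] at h2
    have e : (derivative P - C (b : ℂ) * (X * P)) * (derivative (cj P) - C (b : ℂ) * (X * cj P))
      = derivative P * derivative (cj P) - C (b : ℂ) * (X * derivative (P * cj P))
        + C (b : ℂ) * (C (b : ℂ) * (X * (X * (P * cj P)))) := by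
      simp only [derivative_mul]; ring
    have e3 : X * P * (X * cj P) = X * (X * (P * cj P)) := by ring
    rw [← lam_gam, ← lam_gam, ← lam_gam, ← lam_gam, hc, hcX, e, e3, lam_add hb, lam_sub hb, lam_smul, lam_smul,
      lam_smul, gam_cj_deriv]
    linear_combination (-(b : ℂ)) * h2
  have h' : Gam b (derivative P - C (b : ℂ) * (X * P)) + b ^ 2 * Gam b (X * P)
      = Gam b (derivative P) + b * Gam b P := by exact_mod_cast h
  rw [h']
  linarith


/-- transition angle -/
def Th (t : ℝ) : ℝ := π / 2 * Real.smoothTransition t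

theorem Th_contDiff {n : ℕ∞} : ContDiff ℝ n Th := contDiff_const.mul Real.smoothTransition.contDiff

theorem Th_zero {t : ℝ} (h : t ≤ 0) : Th t = 0 := by
  simp [Th, Real.smoothTransition.zero_of_nonpos h]

theorem Th_one {t : ℝ} (h : 1 ≤ t) : Th t = π / 2 := by
  simp [Th, Real.smoothTransition.one_of_one_le h]

theorem Th_deriv_zero {t : ℝ} (h : t ≤ 0) : deriv Th t = 0 := by
  apply IsLocalMin.deriv_eq_zero
  refine Filter.Eventually.of_forall fun s => ?_
  rw [Th_zero h]
  have := Real.smoothTransition.nonneg s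
  unfold Th; positivity

theorem Th_deriv_one {t : ℝ} (h : 1 ≤ t) : deriv Th t = 0 := by
  apply IsLocalMax.deriv_eq_zero
  refine Filter.Eventually.of_forall fun s => ?_
  rw [Th_one h]
  have := Real.smoothTransition.le_one s
  unfold Th
  have h2 := Real.pi_pos
  nlinarith

theorem Th_hasDerivAt (t : ℝ) : HasDerivAt Th (deriv Th t) t :=
  ((Th_contDiff (n := 1)).differentiable (by norm_num) t).hasDerivAt

theorem Th_deriv_bound : ∃ M : ℝ, 0 < M ∧ ∀ t, |deriv Th t| ≤ M := by
  have hc : Continuous (deriv Th) := (Th_contDiff (n := 1)).continuous_deriv (by norm_num)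
  obtain ⟨C, hC⟩ := (isCompact_Icc (a := (0 : ℝ)) (b := 1)).exists_bound_of_continuousOn hc.continuousOn
  refine ⟨max C 1, by positivity, fun t => ?_⟩
  by_cases h0 : t ≤ 0
  · rw [Th_deriv_zero h0]; simp
  by_cases h1 : 1 ≤ t
  · rw [Th_deriv_one h1]; simp
  push Not at h0 h1
  exact (hC t ⟨h0.le, h1.le⟩).trans (le_max_left _ _)

/-- cutoff -/
def ct (w L t : ℝ) : ℝ := Real.sin (Th (t / w)) * Real.cos (Th ((t - L) / w))

/-- its derivative -/
def ctd (w L t : ℝ) : ℝ := Real.cos (Th (t / w)) * (deriv Th (t / w) / w) * Real.cos (Th ((t - L) / w)) +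
  Real.sin (Th (t / w)) * (- Real.sin (Th ((t - L) / w)) * (deriv Th ((t - L) / w) / w))

theorem ct_contDiff (w L : ℝ) {n : ℕ∞} : ContDiff ℝ n (ct w L) := by
  unfold ct
  refine ContDiff.mul ?_ ?_
  · exact Real.contDiff_sin.comp (Th_contDiff.comp (contDiff_id.div_const w))
  · exact Real.contDiff_cos.comp (Th_contDiff.comp ((contDiff_id.sub contDiff_const).div_const w))

theorem ct_hasDerivAt (w L t : ℝ) : HasDerivAt (ct w L) (ctd w L t) t := by
  have h1 : HasDerivAt (fun t => Th (t / w)) (deriv Th (t / w) * (1 / w)) t :=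
    HasDerivAt.comp (h₂ := Th) t (Th_hasDerivAt (t / w)) ((hasDerivAt_id t).div_const w)
  have h2 : HasDerivAt (fun t => Th ((t - L) / w)) (deriv Th ((t - L) / w) * (1 / w)) t :=
    HasDerivAt.comp (h₂ := Th) t (Th_hasDerivAt ((t - L) / w)) (((hasDerivAt_id t).sub_const L).div_const w)
  have h3 := h1.sin.mul h2.cos
  refine h3.congr_deriv ?_
  unfold ctd
  ring

theorem ctd_continuous (w L : ℝ) : Continuous (ctd w L) := by
  have h : deriv (ct w L) = ctd w L := funext fun t => (ct_hasDerivAt w L t).deriv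
  rw [← h]
  exact (ct_contDiff w L (n := 1)).continuous_deriv (by norm_num)

theorem ct_continuous (w L : ℝ) : Continuous (ct w L) := (ct_contDiff w L (n := 0)).continuous

section
variable {w L : ℝ}

theorem ct_left (hw : 0 < w) {t : ℝ} (ht : t ≤ 0) : ct w L t = 0 := by
  have : t / w ≤ 0 := div_nonpos_of_nonpos_of_nonneg ht hw.le
  simp [ct, Th_zero this]

theorem ct_right (hw : 0 < w) {t : ℝ} (ht : L + w ≤ t) : ct w L t = 0 := by
  have : 1 ≤ (t - L) / w := by rw [le_div_iff₀ hw]; linarith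
  simp [ct, Th_one this]

theorem ctd_left (hw : 0 < w) {t : ℝ} (ht : t ≤ 0) : ctd w L t = 0 := by
  have : t / w ≤ 0 := div_nonpos_of_nonpos_of_nonneg ht hw.le
  simp [ctd, Th_zero this, Th_deriv_zero this]

theorem ctd_right (hw : 0 < w) {t : ℝ} (ht : L + w ≤ t) : ctd w L t = 0 := by
  have : 1 ≤ (t - L) / w := by rw [le_div_iff₀ hw]; linarith
  simp [ctd, Th_one this, Th_deriv_one this]

theorem ct_mid (hw : 0 < w) {t : ℝ} (ht : t ≤ L) : ct w L t = Real.sin (Th (t / w)) ∧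
    ctd w L t = Real.cos (Th (t / w)) * (deriv Th (t / w) / w) := by
  have : (t - L) / w ≤ 0 := div_nonpos_of_nonpos_of_nonneg (by linarith) hw.le
  simp [ct, ctd, Th_zero this]

theorem ct_mid' (hw : 0 < w) {t : ℝ} (ht : w ≤ t + L) : ct w L (t + L) = Real.cos (Th (t / w)) ∧
    ctd w L (t + L) = - Real.sin (Th (t / w)) * (deriv Th (t / w) / w) := by
  have : 1 ≤ (t + L) / w := by rw [le_div_iff₀ hw]; linarith
  simp [ct, ctd, Th_one this]

theorem ct_sq (hw : 0 < w) (hwL : w ≤ L) {t : ℝ} (h0 : 0 ≤ t) (h1 : t ≤ L) :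
    ct w L t ^ 2 + ct w L (t + L) ^ 2 = 1 := by
  rw [(ct_mid hw h1).1, (ct_mid' hw (by linarith)).1]
  exact Real.sin_sq_add_cos_sq _

theorem norm_rot (s c d : ℝ) (h : s ^ 2 + c ^ 2 = 1) (α β : ℂ) :
    ‖(s : ℂ) * α + ((c * d : ℝ) : ℂ) * β‖ ^ 2 + ‖(c : ℂ) * α + ((- s * d : ℝ) : ℂ) * β‖ ^ 2
      = ‖α‖ ^ 2 + d ^ 2 * ‖β‖ ^ 2 := by
  simp only [← Complex.normSq_eq_norm_sq, Complex.normSq_apply, Complex.add_re, Complex.mul_re,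
    Complex.add_im, Complex.mul_im, Complex.ofReal_re, Complex.ofReal_im]
  linear_combination (α.re ^ 2 + α.im ^ 2 + d ^ 2 * (β.re ^ 2 + β.im ^ 2)) * h

theorem ct_en (hw : 0 < w) (hwL : w ≤ L) {M : ℝ} (hM : ∀ t, |deriv Th t| ≤ M)
    {t : ℝ} (h0 : 0 ≤ t) (h1 : t ≤ L) (α β : ℂ) :
    ‖(ct w L t : ℂ) * α + (ctd w L t : ℂ) * β‖ ^ 2 +
      ‖(ct w L (t + L) : ℂ) * α + (ctd w L (t + L) : ℂ) * β‖ ^ 2 ≤ ‖α‖ ^ 2 + (M / w) ^ 2 * ‖β‖ ^ 2 := by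
  rw [(ct_mid hw h1).1, (ct_mid' hw (by linarith)).1, (ct_mid hw h1).2, (ct_mid' hw (by linarith)).2]
  rw [norm_rot _ _ _ (Real.sin_sq_add_cos_sq _)]
  have : (deriv Th (t / w) / w) ^ 2 ≤ (M / w) ^ 2 := by
    rw [div_pow, div_pow]
    have := sq_le_sq' (abs_le.mp (hM (t / w))).1 (abs_le.mp (hM (t / w))).2
    gcongr
  gcongr

/-- finite overlap -/
theorem sum_overlap (hL : 0 < L) (F : ℝ → ℝ) (hF : ∀ t, 0 ≤ F t) (hl : ∀ t ≤ 0, F t = 0)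
    (hr : ∀ t, 2 * L ≤ t → F t = 0) (c : ℝ) (hc : ∀ t, 0 ≤ t → t ≤ L → F t + F (t + L) ≤ c)
    (m : ℕ) (Z : ℝ) : ∑ j ∈ Finset.range m, F (Z - j * L) ≤ c := by
  set i : ℤ := ⌊Z / L⌋ with hi
  have hi1 : (i : ℝ) * L ≤ Z := by
    have := Int.floor_le (Z / L); rwa [le_div_iff₀ hL] at this
  have hi2 : Z < (i + 1 : ℝ) * L := by
    have := Int.lt_floor_add_one (Z / L); rwa [div_lt_iff₀ hL] at this
  set t := Z - i * L with ht
  have hcc := hc t (by linarith) (by linarith)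
  have key : ∀ j : ℕ, F (Z - j * L) ≤ (if (j : ℤ) = i then F t else 0) + (if (j : ℤ) = i - 1 then F (t + L) else 0) := by
    intro j
    by_cases h1 : (j : ℤ) = i
    · have h2 : (j : ℝ) = i := by exact_mod_cast h1
      rw [if_pos h1, if_neg (by omega), h2]; simp [ht]
    by_cases h2 : (j : ℤ) = i - 1
    · have h3 : (j : ℝ) = i - 1 := by exact_mod_cast h2
      rw [if_neg h1, if_pos h2, h3]
      have : Z - (i - 1 : ℝ) * L = t + L := by rw [ht]; ring
      rw [this]; simp
    rw [if_neg h1, if_neg h2]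
    rcases lt_or_gt_of_ne h1 with h | h
    · have h3 : (j : ℤ) + 2 ≤ i := by omega
      have h4 : (j : ℝ) + 2 ≤ i := by exact_mod_cast h3
      rw [hr _ (by nlinarith)]; simp
    · have h3 : i + 1 ≤ (j : ℤ) := by omega
      have h4 : (i : ℝ) + 1 ≤ j := by exact_mod_cast h3
      rw [hl _ (by nlinarith)]; simp
  have one : ∀ (i : ℤ) (x : ℝ), 0 ≤ x → ∑ j ∈ Finset.range m, (if (j : ℤ) = i then x else 0) ≤ x := by
    intro i x hx
    rcases lt_or_ge i 0 with h | h
    · rw [Finset.sum_eq_zero]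
      · exact hx
      · intro j _; rw [if_neg]; omega
    · obtain ⟨n, rfl⟩ := Int.eq_ofNat_of_zero_le h
      simp only [Nat.cast_inj, Finset.sum_ite_eq']
      split_ifs <;> simp [hx]
  calc _ ≤ ∑ j ∈ Finset.range m, ((if (j : ℤ) = i then F t else 0) + (if (j : ℤ) = i - 1 then F (t + L) else 0)) :=
        Finset.sum_le_sum fun j _ => key j
    _ ≤ F t + F (t + L) := by
        rw [Finset.sum_add_distrib]
        exact add_le_add (one _ _ (hF _)) (one _ _ (hF _))
    _ ≤ c := hcc

theorem sum_ct_sq_le (hw : 0 < w) (hwL : w ≤ L) (m : ℕ) (Z : ℝ) :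
    ∑ j ∈ Finset.range m, ct w L (Z - j * L) ^ 2 ≤ 1 :=
  sum_overlap (by linarith) (fun t => ct w L t ^ 2) (fun t => sq_nonneg _)
    (fun t ht => by simp [ct_left hw ht]) (fun t ht => by simp [ct_right hw (by linarith : L + w ≤ t)]) 1
    (fun t h0 h1 => (ct_sq hw hwL h0 h1).le) m Z

theorem sum_ct_en (hw : 0 < w) (hwL : w ≤ L) {M : ℝ} (hM : ∀ t, |deriv Th t| ≤ M) (m : ℕ) (Z : ℝ) (α β : ℂ) :
    ∑ j ∈ Finset.range m, ‖(ct w L (Z - j * L) : ℂ) * α + (ctd w L (Z - j * L) : ℂ) * β‖ ^ 2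
      ≤ ‖α‖ ^ 2 + (M / w) ^ 2 * ‖β‖ ^ 2 :=
  sum_overlap (by linarith) (fun t => ‖(ct w L t : ℂ) * α + (ctd w L t : ℂ) * β‖ ^ 2) (fun t => sq_nonneg _)
    (fun t ht => by simp [ct_left hw ht, ctd_left hw ht])
    (fun t ht => by simp [ct_right hw (by linarith : L + w ≤ t), ctd_right hw (by linarith : L + w ≤ t)]) _
    (fun t h0 h1 => ct_en hw hwL hM h0 h1 α β) m Z

theorem sum_ct_sq_eq (hw : 0 < w) (hwL : w ≤ L) (m : ℕ) (Z : ℝ) (h1 : w ≤ Z) (h2 : Z ≤ m * L) :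
    ∑ j ∈ Finset.range m, ct w L (Z - j * L) ^ 2 = 1 := by
  have tel : ∀ t, ct w L t ^ 2 = Real.sin (Th (t / w)) ^ 2 - Real.sin (Th ((t - L) / w)) ^ 2 := by
    intro t
    rcases le_total t L with h | h
    · rw [(ct_mid hw h).1, Th_zero (div_nonpos_of_nonpos_of_nonneg (by linarith : t - L ≤ 0) hw.le)]
      simp
    · have := Th_one (show 1 ≤ t / w by rw [le_div_iff₀ hw]; linarith)
      rw [ct, this]
      have h3 := Real.sin_sq_add_cos_sq (Th ((t - L) / w))
      simp only [Real.sin_pi_div_two]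
      nlinarith
  have h3 : ∀ j : ℕ, ct w L (Z - j * L) ^ 2 =
      (fun j : ℕ => Real.sin (Th ((Z - j * L) / w)) ^ 2) j - (fun j : ℕ => Real.sin (Th ((Z - j * L) / w)) ^ 2) (j + 1) := by
    intro j
    rw [tel]
    have : Z - ((j + 1 : ℕ) : ℝ) * L = Z - j * L - L := by push_cast; ring
    simp only [this]
  rw [Finset.sum_congr rfl fun j _ => h3 j, Finset.sum_range_sub']
  have a1 : Th ((Z - m * L) / w) = 0 := Th_zero (div_nonpos_of_nonpos_of_nonneg (by linarith) hw.le)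
  have a2 : Th (Z / w) = π / 2 := Th_one (by rw [le_div_iff₀ hw]; linarith)
  simp [a1, a2]

/-- integration over two periods -/
theorem int_two_periods (hL : 0 < L) (H : ℝ → ℝ) (hH : Continuous H) (hl : ∀ t ≤ 0, H t = 0)
    (hr : ∀ t, 2 * L ≤ t → H t = 0) :
    ∫ t, H t = ∫ t in (0 : ℝ)..L, (H t + H (t + L)) := by
  have h1 : ∫ t, H t = ∫ t in (0 : ℝ)..(2 * L), H t := by
    rw [intervalIntegral.integral_of_le (by linarith), setIntegral_eq_integral_of_forall_compl_eq_zero]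
    intro t ht
    rw [Set.mem_Ioc, not_and_or] at ht
    rcases ht with h | h
    · exact hl t (by linarith)
    · exact hr t (by linarith)
  have h2 : ∫ t in (0 : ℝ)..L, H (t + L) = ∫ t in L..(2 * L), H t := by
    rw [intervalIntegral.integral_comp_add_right]; congr 1 <;> ring
  rw [h1, intervalIntegral.integral_add (hH.intervalIntegrable _ _)
    ((show Continuous fun t => H (t + L) by fun_prop).intervalIntegrable _ _), h2,
    intervalIntegral.integral_add_adjacent_intervals (hH.intervalIntegrable _ _) (hH.intervalIntegrable _ _)]

theorem per_sq (hw : 0 < w) (hwL : w ≤ L) (α : ℝ → ℂ) (hα : Continuous α) (hp : ∀ t, α (t + L) = α t) :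
    ∫ t, ct w L t ^ 2 * ‖α t‖ ^ 2 = ∫ t in (0 : ℝ)..L, ‖α t‖ ^ 2 := by
  have hc := ct_continuous w L
  rw [int_two_periods (L := L) (by linarith) _ (by fun_prop) (fun t ht => by simp [ct_left hw ht])
    (fun t ht => by simp [ct_right hw (by linarith : L + w ≤ t)])]
  apply intervalIntegral.integral_congr
  intro t ht
  rw [Set.uIcc_of_le (by linarith)] at ht
  simp only [hp]
  rw [← add_mul, ct_sq hw hwL ht.1 ht.2, one_mul]

theorem per_en (hw : 0 < w) (hwL : w ≤ L) {M : ℝ} (hM : ∀ t, |deriv Th t| ≤ M)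
    (α β : ℝ → ℂ) (hα : Continuous α) (hp : ∀ t, α (t + L) = α t)
    (hβ : Continuous β) (hq : ∀ t, β (t + L) = β t) :
    ∫ t, ‖(ct w L t : ℂ) * α t + (ctd w L t : ℂ) * β t‖ ^ 2
      ≤ ∫ t in (0 : ℝ)..L, (‖α t‖ ^ 2 + (M / w) ^ 2 * ‖β t‖ ^ 2) := by
  have hc := ct_continuous w L
  have hc' := ctd_continuous w L
  rw [int_two_periods (L := L) (by linarith) _ (by fun_prop) (fun t ht => by simp [ct_left hw ht, ctd_left hw ht])
    (fun t ht => by simp [ct_right hw (by linarith : L + w ≤ t), ctd_right hw (by linarith : L + w ≤ t)])]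
  apply intervalIntegral.integral_mono_on (by linarith)
  · exact Continuous.intervalIntegrable (by fun_prop) _ _
  · exact Continuous.intervalIntegrable (by fun_prop) _ _
  intro t ht
  simp only [hp, hq]
  exact ct_en hw hwL hM ht.1 ht.2 _ _
end


theorem neg_extend {E H : Type*} [AddCommGroup E] [Module ℂ E] [NormedAddCommGroup H]
    [InnerProductSpace ℂ H] (T0 T1 T2 : E →ₗ[ℂ] H) (lam : ℝ) (V : Submodule ℂ E)
    [FiniteDimensional ℂ V]
    (hV : ∀ v ∈ V, v ≠ 0 → ‖T1 v‖ ^ 2 + ‖T2 v‖ ^ 2 - lam * ‖T0 v‖ ^ 2 < 0) (u : E)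
    (hu : ‖T1 u‖ ^ 2 + ‖T2 u‖ ^ 2 - lam * ‖T0 u‖ ^ 2 < 0)
    (ho : ∀ v ∈ V, inner ℂ (T1 v) (T1 u) + inner ℂ (T2 v) (T2 u) - lam * inner ℂ (T0 v) (T0 u) = 0) :
    ∃ V' : Submodule ℂ E, Module.finrank ℂ V' = Module.finrank ℂ V + 1 ∧
      ∀ v ∈ V', v ≠ 0 → ‖T1 v‖ ^ 2 + ‖T2 v‖ ^ 2 - lam * ‖T0 v‖ ^ 2 < 0 := by
  have huV : u ∉ V := by
    intro h
    have h1 := ho u h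
    simp only [inner_self_eq_norm_sq_to_K] at h1
    have h2 : ‖T1 u‖ ^ 2 + ‖T2 u‖ ^ 2 - lam * ‖T0 u‖ ^ 2 = 0 := by
      apply Complex.ofReal_injective; push_cast; exact h1
    linarith
  have hu0 : u ≠ 0 := fun h => huV (h ▸ V.zero_mem)
  refine ⟨V ⊔ Submodule.span ℂ {u}, ?_, ?_⟩
  · have h := Submodule.finrank_sup_add_finrank_inf_eq V (Submodule.span ℂ {u})
    have hd : V ⊓ Submodule.span ℂ {u} = ⊥ := by
      rw [← disjoint_iff]
      exact (Submodule.disjoint_span_singleton' hu0).mpr huV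
    rw [hd, finrank_bot, finrank_span_singleton hu0] at h
    simpa using h
  · intro x hx hx0
    obtain ⟨v, hv, y, hy, rfl⟩ := Submodule.mem_sup.mp hx
    obtain ⟨a, rfl⟩ := Submodule.mem_span_singleton.mp hy
    have ex : ∀ T : E →ₗ[ℂ] H, ‖T (v + a • u)‖ ^ 2
        = ‖T v‖ ^ 2 + 2 * (a * inner ℂ (T v) (T u)).re + ‖a‖ ^ 2 * ‖T u‖ ^ 2 := by
      intro T
      rw [map_add, map_smul, @norm_add_sq ℂ, inner_smul_right, norm_smul, mul_pow]
      rfl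
    rw [ex, ex, ex]
    have h1 : (a * inner ℂ (T1 v) (T1 u)).re + (a * inner ℂ (T2 v) (T2 u)).re
        - lam * (a * inner ℂ (T0 v) (T0 u)).re = 0 := by
      have := congrArg (fun z => (a * z).re) (ho v hv)
      simp only [mul_zero, Complex.zero_re] at this
      rw [← this]
      simp [Complex.mul_re, Complex.mul_im]
      ring
    have h2 : ‖T1 v‖ ^ 2 + ‖T2 v‖ ^ 2 - lam * ‖T0 v‖ ^ 2 +
        ‖a‖ ^ 2 * (‖T1 u‖ ^ 2 + ‖T2 u‖ ^ 2 - lam * ‖T0 u‖ ^ 2) < 0 := by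
      by_cases hv0 : v = 0
      · have ha : a ≠ 0 := by
          rintro rfl
          simp [hv0] at hx0
        have : 0 < ‖a‖ ^ 2 := by positivity
        simp only [hv0, map_zero, norm_zero]
        nlinarith
      · have := hV v hv hv0
        have : 0 ≤ ‖a‖ ^ 2 := by positivity
        nlinarith
    nlinarith

/-- test functions -/
def testSub (Ω : Set (ℝ × ℝ)) : Submodule ℂ (ℝ × ℝ → ℂ) where
  carrier := {u | IsTestOn Ω u}
  zero_mem' := ⟨contDiff_const, HasCompactSupport.zero, by simp [tsupport]⟩
  add_mem' := by
    rintro u v ⟨h1, h2, h3⟩ ⟨k1, k2, k3⟩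
    exact ⟨h1.add k1, h2.add k2, (tsupport_add u v).trans (Set.union_subset h3 k3)⟩
  smul_mem' := by
    rintro a u ⟨h1, h2, h3⟩
    exact ⟨h1.const_smul a, h2.smul_left (f := fun _ => a),
      (tsupport_smul_subset_right (fun _ => a) u).trans h3⟩

/-- first magnetic derivative -/
def D1 (b : ℝ) (u : ℝ × ℝ → ℂ) (p : ℝ × ℝ) : ℂ := -Complex.I * dX u p - ((b * p.2 / 2 : ℝ) : ℂ) * u p
/-- second magnetic derivative -/
def D2 (b : ℝ) (u : ℝ × ℝ → ℂ) (p : ℝ × ℝ) : ℂ := -Complex.I * dY u p + ((b * p.1 / 2 : ℝ) : ℂ) * u p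

theorem cont_dir {u : ℝ × ℝ → ℂ} (hu : ContDiff ℝ (⊤ : ℕ∞) u) (e : ℝ × ℝ) :
    Continuous (fun p => fderiv ℝ u p e) :=
  (hu.continuous_fderiv (by simp)).clm_apply continuous_const

theorem supp_dir {u : ℝ × ℝ → ℂ} (hu : HasCompactSupport u) (e : ℝ × ℝ) :
    HasCompactSupport (fun p => fderiv ℝ u p e) := HasCompactSupport.fderiv_apply ℝ hu e

theorem D1_cont (b : ℝ) {Ω} {u : ℝ × ℝ → ℂ} (hu : IsTestOn Ω u) :
    Continuous (D1 b u) ∧ HasCompactSupport (D1 b u) := by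
  have h1 := cont_dir hu.1 (1, 0)
  have h2 := supp_dir hu.2.1 (1, 0)
  have h3 := hu.1.continuous
  constructor
  · unfold D1 dX; fun_prop
  · exact (h2.mul_left (f := fun _ => -Complex.I)).sub
      (hu.2.1.mul_left (f := fun p : ℝ × ℝ => ((b * p.2 / 2 : ℝ) : ℂ)))

theorem D2_cont (b : ℝ) {Ω} {u : ℝ × ℝ → ℂ} (hu : IsTestOn Ω u) :
    Continuous (D2 b u) ∧ HasCompactSupport (D2 b u) := by
  have h1 := cont_dir hu.1 (0, 1)
  have h2 := supp_dir hu.2.1 (0, 1)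
  have h3 := hu.1.continuous
  constructor
  · unfold D2 dY; fun_prop
  · exact (h2.mul_left (f := fun _ => -Complex.I)).add
      (hu.2.1.mul_left (f := fun p : ℝ × ℝ => ((b * p.1 / 2 : ℝ) : ℂ)))

/-- embedding into L2 -/
def toL2 {E : Type*} [AddCommGroup E] [Module ℂ E] (T : E → (ℝ × ℝ → ℂ)) (hT : ∀ u, MemLp (T u) 2 (volume : Measure (ℝ × ℝ)))
    (hadd : ∀ u v, T (u + v) = T u + T v) (hsm : ∀ (a : ℂ) u, T (a • u) = a • T u) :
    E →ₗ[ℂ] Lp ℂ 2 (volume : Measure (ℝ × ℝ)) where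
  toFun u := (hT u).toLp (T u)
  map_add' u v := by
    rw [← MemLp.toLp_add]
    congr 1
    exact hadd u v
  map_smul' a u := by
    rw [RingHom.id_apply, ← MemLp.toLp_const_smul]
    congr 1
    exact hsm a u

theorem toL2_norm {E : Type*} [AddCommGroup E] [Module ℂ E] (T : E → (ℝ × ℝ → ℂ)) (hT hadd hsm) (u : E) :
    ‖toL2 T hT hadd hsm u‖ ^ 2 = ∫ p, ‖T u p‖ ^ 2 := by
  have h := L2.inner_def (𝕜 := ℂ) (toL2 T hT hadd hsm u) (toL2 T hT hadd hsm u)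
  rw [inner_self_eq_norm_sq_to_K] at h
  have h2 : ∫ p, inner ℂ (toL2 T hT hadd hsm u p) (toL2 T hT hadd hsm u p)
      = ∫ p, ((‖T u p‖ ^ 2 : ℝ) : ℂ) := by
    apply integral_congr_ae
    filter_upwards [(hT u).coeFn_toLp] with p hp
    change inner ℂ ((hT u).toLp (T u) p) ((hT u).toLp (T u) p) = _
    rw [hp, inner_self_eq_norm_sq_to_K]; norm_cast
  rw [h2, integral_complex_ofReal] at h
  apply Complex.ofReal_injective
  rw [← h]
  push_cast; rfl

theorem test_count (Ω : Set (ℝ × ℝ)) (b lam : ℝ)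
    (hb : BddAbove {n : ℕ | ∃ V : Submodule ℂ (ℝ × ℝ → ℂ), (V : Set (ℝ × ℝ → ℂ)) ⊆ {u | IsTestOn Ω u} ∧
      Module.finrank ℂ V = n ∧ ∀ u ∈ V, u ≠ 0 → qb b u < lam * ∫ p : ℝ × ℝ, ‖u p‖ ^ 2})
    {F : Type*} [AddCommGroup F] [Module ℂ F] [FiniteDimensional ℂ F] (m : ℕ)
    (W : ℕ → F →ₗ[ℂ] (ℝ × ℝ → ℂ)) (hW : ∀ j c, IsTestOn Ω (W j c))
    (hneg : ∀ c, c ≠ 0 → ∑ j ∈ Finset.range m, qb b (W j c)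
      < lam * ∑ j ∈ Finset.range m, ∫ p : ℝ × ℝ, ‖W j c p‖ ^ 2) :
    Module.finrank ℂ F ≤ m * NNb b lam Ω := by
  set S := {n : ℕ | ∃ V : Submodule ℂ (ℝ × ℝ → ℂ), (V : Set (ℝ × ℝ → ℂ)) ⊆ {u | IsTestOn Ω u} ∧
      Module.finrank ℂ V = n ∧ ∀ u ∈ V, u ≠ 0 → qb b u < lam * ∫ p : ℝ × ℝ, ‖u p‖ ^ 2} with hS
  set N := NNb b lam Ω with hN
  have hNS : N = sSup S := rfl
  have h0 : (0 : ℕ) ∈ S := ⟨⊥, by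
    intro u hu
    have : u = 0 := by simpa using hu
    rw [this]; exact (testSub Ω).zero_mem, finrank_bot _ _, fun u hu h => absurd ((Submodule.mem_bot ℂ).mp hu) h⟩
  have hmem : N ∈ S := Nat.sSup_mem ⟨0, h0⟩ hb
  obtain ⟨V, hVt, hVf, hVn⟩ : ∃ V : Submodule ℂ (ℝ × ℝ → ℂ), (V : Set (ℝ × ℝ → ℂ)) ⊆ {u | IsTestOn Ω u} ∧
      (FiniteDimensional ℂ V ∧ Module.finrank ℂ V = N) ∧ ∀ u ∈ V, u ≠ 0 → qb b u < lam * ∫ p : ℝ × ℝ, ‖u p‖ ^ 2 := by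
    rcases Nat.eq_zero_or_pos N with h | h
    · refine ⟨⊥, ?_, ⟨inferInstance, by rw [finrank_bot, h]⟩, fun u hu h => absurd ((Submodule.mem_bot ℂ).mp hu) h⟩
      intro u hu
      have : u = 0 := by simpa using hu
      rw [this]; exact (testSub Ω).zero_mem
    · obtain ⟨V, h1, h2, h3⟩ := hmem
      exact ⟨V, h1, ⟨Module.finite_of_finrank_pos (by omega), h2⟩, h3⟩
  obtain ⟨hVfin, hVN⟩ := hVf
  let E := testSub Ω
  have hdiff : ∀ u : E, Differentiable ℝ u.1 := fun u => u.2.1.differentiable (by simp)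
  let T0 : E →ₗ[ℂ] Lp ℂ 2 (volume : Measure (ℝ × ℝ)) := toL2 (fun u => u.1)
    (fun u => u.2.1.continuous.memLp_of_hasCompactSupport u.2.2.1) (fun u v => rfl) (fun a u => rfl)
  let T1 : E →ₗ[ℂ] Lp ℂ 2 (volume : Measure (ℝ × ℝ)) := toL2 (fun u => D1 b u.1)
    (fun u => (D1_cont b u.2).1.memLp_of_hasCompactSupport (D1_cont b u.2).2)
    (fun u v => by
      ext p
      simp only [D1, dX, Submodule.coe_add, Pi.add_apply]
      rw [fderiv_add (hdiff u p) (hdiff v p)]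
      simp only [_root_.add_apply]; ring)
    (fun a u => by
      ext p
      simp only [D1, dX, Submodule.coe_smul, Pi.smul_apply, smul_eq_mul]
      rw [fderiv_const_smul (hdiff u p)]
      simp only [_root_.smul_apply, smul_eq_mul]; ring)
  let T2 : E →ₗ[ℂ] Lp ℂ 2 (volume : Measure (ℝ × ℝ)) := toL2 (fun u => D2 b u.1)
    (fun u => (D2_cont b u.2).1.memLp_of_hasCompactSupport (D2_cont b u.2).2)
    (fun u v => by
      ext p
      simp only [D2, dY, Submodule.coe_add, Pi.add_apply]
      rw [fderiv_add (hdiff u p) (hdiff v p)]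
      simp only [_root_.add_apply]; ring)
    (fun a u => by
      ext p
      simp only [D2, dY, Submodule.coe_smul, Pi.smul_apply, smul_eq_mul]
      rw [fderiv_const_smul (hdiff u p)]
      simp only [_root_.smul_apply, smul_eq_mul]; ring)
  have hn0 : ∀ u : E, ‖T0 u‖ ^ 2 = ∫ p, ‖u.1 p‖ ^ 2 := fun u => toL2_norm _ _ _ _ u
  have hq : ∀ u : E, ‖T1 u‖ ^ 2 + ‖T2 u‖ ^ 2 = qb b u.1 := by
    intro u
    have e1 : ‖T1 u‖ ^ 2 = ∫ p, ‖D1 b u.1 p‖ ^ 2 := toL2_norm _ _ _ _ u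
    have e2 : ‖T2 u‖ ^ 2 = ∫ p, ‖D2 b u.1 p‖ ^ 2 := toL2_norm _ _ _ _ u
    have i1 := (memLp_two_iff_integrable_sq_norm (D1_cont b u.2).1.aestronglyMeasurable).mp
      ((D1_cont b u.2).1.memLp_of_hasCompactSupport (μ := volume) (D1_cont b u.2).2)
    have i2 := (memLp_two_iff_integrable_sq_norm (D2_cont b u.2).1.aestronglyMeasurable).mp
      ((D2_cont b u.2).1.memLp_of_hasCompactSupport (μ := volume) (D2_cont b u.2).2)
    rw [e1, e2, ← integral_add i1 i2]
    rfl
  let V1 : Submodule ℂ E := V.comap E.subtype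
  have hle : V ≤ E := hVt
  let eq1 : V1 ≃ₗ[ℂ] V := Submodule.comapSubtypeEquivOfLe hle
  have : FiniteDimensional ℂ V1 := eq1.symm.finiteDimensional
  have hV1N : Module.finrank ℂ V1 = N := by rw [eq1.finrank_eq, hVN]
  -- orthogonality implies nonneg
  have hpos : ∀ u : E, (∀ v ∈ V1, inner ℂ (T1 v) (T1 u) + inner ℂ (T2 v) (T2 u) - lam * inner ℂ (T0 v) (T0 u) = 0) →
      0 ≤ qb b u.1 - lam * ∫ p, ‖u.1 p‖ ^ 2 := by
    intro u hu
    by_contra hlt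
    push Not at hlt
    obtain ⟨V', hf, hn⟩ := neg_extend T0 T1 T2 lam V1 (by
      intro v hv hv0
      rw [hq, hn0]
      have := hVn v.1 hv (fun h => hv0 (Subtype.ext h))
      linarith) u (by rw [hq, hn0]; exact hlt) hu
    have : N + 1 ∈ S := by
      refine ⟨V'.map E.subtype, ?_, ?_, ?_⟩
      · rintro _ ⟨x, -, rfl⟩
        exact x.2
      · rw [← hV1N, ← hf]
        exact Submodule.finrank_map_subtype_eq _ _
      · rintro _ ⟨x, hx, rfl⟩ hx0
        have := hn x hx (fun h => hx0 (by simp [h]))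
        rw [hq, hn0] at this
        change qb b x.1 < lam * ∫ p : ℝ × ℝ, ‖x.1 p‖ ^ 2
        linarith
    have := le_csSup hb this
    rw [← hNS] at this
    omega
  -- dimension count
  by_contra hgt
  push Not at hgt
  have hfree : Module.Free ℂ V1 := Module.Free.of_divisionRing ℂ V1
  let bas := Module.finBasis ℂ V1
  let W' : ℕ → F →ₗ[ℂ] E := fun j => (W j).codRestrict E (fun c => hW j c)
  let B : E → E →ₗ[ℂ] ℂ := fun v =>
    (innerₛₗ ℂ (T1 v)).comp T1 + (innerₛₗ ℂ (T2 v)).comp T2 - (lam : ℂ) • (innerₛₗ ℂ (T0 v)).comp T0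
  have hB : ∀ v u, B v u = inner ℂ (T1 v) (T1 u) + inner ℂ (T2 v) (T2 u) - lam * inner ℂ (T0 v) (T0 u) := by
    intro v u; rfl
  let Φ : F →ₗ[ℂ] (Fin m × Fin (Module.finrank ℂ V1) → ℂ) :=
    LinearMap.pi fun ij => (B (bas ij.2).1).comp (W' ij.1)
  have hker : LinearMap.ker Φ ≠ ⊥ := by
    apply LinearMap.ker_ne_bot_of_finrank_lt
    rw [Module.finrank_fintype_fun_eq_card, Fintype.card_prod, Fintype.card_fin, Fintype.card_fin, hV1N]
    exact hgt
  obtain ⟨c, hc, hc0⟩ := (Submodule.ne_bot_iff _).mp hker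
  have hcj : ∀ j ∈ Finset.range m, 0 ≤ qb b (W j c) - lam * ∫ p, ‖W j c p‖ ^ 2 := by
    intro j hj
    apply hpos (W' j c)
    intro v hv
    have h1 : ∀ i, B (bas i).1 (W' j c) = 0 := by
      intro i
      have := congrFun (LinearMap.mem_ker.mp hc) (⟨j, Finset.mem_range.mp hj⟩, i)
      exact this
    have h2 := bas.sum_repr ⟨v, hv⟩
    have h3 : v = ∑ i, bas.repr ⟨v, hv⟩ i • (bas i).1 := by
      have := congrArg V1.subtype h2
      rw [map_sum] at this
      exact this.symm
    rw [h3]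
    simp only [map_sum, map_smul, sum_inner, inner_smul_left, Finset.mul_sum]
    rw [← Finset.sum_add_distrib, ← Finset.sum_sub_distrib]
    apply Finset.sum_eq_zero
    intro i _
    have := h1 i
    rw [hB] at this
    linear_combination ((starRingEnd ℂ) (bas.repr ⟨v, hv⟩ i)) * this
  have := Finset.sum_nonneg hcj
  rw [Finset.sum_sub_distrib, ← Finset.mul_sum] at this
  linarith [hneg c hc0]


theorem int_cs {α : Type*} [MeasurableSpace α] (μ : Measure α) [IsFiniteMeasure μ] (f : α → ℂ)
    (h1 : Integrable f μ) (h2 : Integrable (fun x => ‖f x‖ ^ 2) μ) :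
    ‖∫ x, f x ∂μ‖ ^ 2 ≤ μ.real Set.univ * ∫ x, ‖f x‖ ^ 2 ∂μ := by
  set m := μ.real Set.univ with hm
  set A := ∫ x, ‖f x‖ ∂μ with hA
  set S := ∫ x, ‖f x‖ ^ 2 ∂μ with hS
  have hm0 : 0 ≤ m := measureReal_nonneg
  have hA0 : ‖∫ x, f x ∂μ‖ ≤ A := norm_integral_le_integral_norm _
  have h3 : ‖∫ x, f x ∂μ‖ ^ 2 ≤ A ^ 2 := by gcongr
  refine h3.trans ?_
  have h4 : ∫ x, (m * ‖f x‖ - A) ^ 2 ∂μ = m ^ 2 * S - 2 * m * A * A + A ^ 2 * m := by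
    have e : ∀ x, (m * ‖f x‖ - A) ^ 2 = m ^ 2 * ‖f x‖ ^ 2 - 2 * m * A * ‖f x‖ + A ^ 2 := fun x => by ring
    simp only [e]
    rw [integral_add (show Integrable (fun x => m ^ 2 * ‖f x‖ ^ 2 - 2 * m * A * ‖f x‖) μ from
        (h2.const_mul _).sub (h1.norm.const_mul _)) (integrable_const _),
      integral_sub (h2.const_mul _) (h1.norm.const_mul _), integral_const_mul, integral_const_mul,
      integral_const, smul_eq_mul]
    ring
  have h5 : 0 ≤ ∫ x, (m * ‖f x‖ - A) ^ 2 ∂μ := integral_nonneg fun x => sq_nonneg _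
  rw [h4] at h5
  rcases hm0.eq_or_lt with h | h
  · have : μ = 0 := by
      rw [hm, eq_comm, measureReal_eq_zero_iff] at h
      exact Measure.measure_univ_eq_zero.mp h
    simp [hA, this, ← h]
  · have : 0 ≤ m * (m * S - A ^ 2) := by nlinarith
    have := nonneg_of_mul_nonneg_right this h
    linarith

theorem oned (f f' : ℝ → ℂ) (hf : ∀ x, HasDerivAt f (f' x) x) (hc : Continuous f') {a h x x' : ℝ}
    (hh : 0 ≤ h) (hx : x ∈ Set.Ioc a (a + h)) (hx' : x' ∈ Set.Ioc a (a + h)) :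
    ‖f x - f x'‖ ^ 2 ≤ h * ∫ s in a..(a + h), ‖f' s‖ ^ 2 := by
  wlog hle : x' ≤ x generalizing x x'
  · rw [norm_sub_rev]; exact this hx' hx (by linarith)
  rw [← intervalIntegral.integral_eq_sub_of_hasDerivAt (fun s _ => hf s) (hc.intervalIntegrable _ _),
    intervalIntegral.integral_of_le hle]
  have h1 := int_cs (volume.restrict (Set.Ioc x' x)) f' (hc.integrableOn_Ioc) ((hc.norm.pow 2).integrableOn_Ioc)
  refine h1.trans ?_
  have h2 : (volume.restrict (Set.Ioc x' x)).real Set.univ ≤ h := by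
    simp [hle]; linarith [hx.2, hx'.1]
  have h3 : ∫ s in Set.Ioc x' x, ‖f' s‖ ^ 2 ≤ ∫ s in a..(a + h), ‖f' s‖ ^ 2 := by
    rw [intervalIntegral.integral_of_le (by linarith)]
    apply setIntegral_mono_set ((hc.norm.pow 2).integrableOn_Ioc)
    · exact Filter.Eventually.of_forall fun s => sq_nonneg _
    · exact (Set.Ioc_subset_Ioc hx'.1.le hx.2).eventuallyLE
  have h4 : 0 ≤ ∫ s in Set.Ioc x' x, ‖f' s‖ ^ 2 := integral_nonneg fun s => by positivity
  exact mul_le_mul h2 h3 h4 hh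

/-- cells -/
def cell (a c h : ℝ) : Set (ℝ × ℝ) := Set.Ioc a (a + h) ×ˢ Set.Ioc c (c + h)

theorem cell_meas (a c h : ℝ) : MeasurableSet (cell a c h) := measurableSet_Ioc.prod measurableSet_Ioc

theorem cell_int {E : Type*} [NormedAddCommGroup E] (f : ℝ × ℝ → E) (hf : Continuous f) (a c h : ℝ) :
    IntegrableOn f (cell a c h) :=
  (hf.continuousOn.integrableOn_compact ((isCompact_Icc (a := a) (b := a + h)).prod
    (isCompact_Icc (a := c) (b := c + h)))).mono_set
    (Set.prod_mono Set.Ioc_subset_Icc_self Set.Ioc_subset_Icc_self)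

theorem cell_vol (a c h : ℝ) (hh : 0 ≤ h) : (volume : Measure (ℝ × ℝ)).real (cell a c h) = h ^ 2 := by
  rw [cell, Measure.volume_eq_prod, measureReal_prod_prod]
  simp [hh]; ring

theorem poincare (u : ℝ × ℝ → ℂ) (hu : ContDiff ℝ (⊤ : ℕ∞) u) (a c h : ℝ) (hh : 0 < h)
    (h0 : ∫ p in cell a c h, u p = 0) :
    ∫ p in cell a c h, ‖u p‖ ^ 2 ≤ 2 * h ^ 2 * ∫ p in cell a c h, (‖dX u p‖ ^ 2 + ‖dY u p‖ ^ 2) := by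
  have cu := hu.continuous
  have cX : Continuous (dX u) := cont_dir hu (1, 0)
  have cY : Continuous (dY u) := cont_dir hu (0, 1)
  have hd : Differentiable ℝ u := hu.differentiable (by simp)
  have dx : ∀ x y, HasDerivAt (fun s => u (s, y)) (dX u (x, y)) x := by
    intro x y
    have h1 : HasDerivAt (fun s : ℝ => (s, y)) ((1 : ℝ), (0 : ℝ)) x :=
      (hasDerivAt_id x).prodMk (hasDerivAt_const x y)
    exact (hd (x, y)).hasFDerivAt.comp_hasDerivAt x h1
  have dy : ∀ x y, HasDerivAt (fun s => u (x, s)) (dY u (x, y)) y := by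
    intro x y
    have h1 : HasDerivAt (fun s : ℝ => (x, s)) ((0 : ℝ), (1 : ℝ)) y :=
      (hasDerivAt_const y x).prodMk (hasDerivAt_id y)
    exact (hd (x, y)).hasFDerivAt.comp_hasDerivAt y h1
  set G : ℝ → ℝ := fun y => ∫ s in a..(a + h), ‖dX u (s, y)‖ ^ 2 with hG
  set K : ℝ → ℝ := fun x => ∫ t in c..(c + h), ‖dY u (x, t)‖ ^ 2 with hK
  have cG : Continuous G :=
    intervalIntegral.continuous_parametric_intervalIntegral_of_continuous' (by fun_prop) a (a + h)
  have cK : Continuous K :=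
    intervalIntegral.continuous_parametric_intervalIntegral_of_continuous' (by fun_prop) c (c + h)
  set Q := cell a c h with hQ
  set XX := ∫ p in Q, ‖dX u p‖ ^ 2 with hXX
  set YY := ∫ p in Q, ‖dY u p‖ ^ 2 with hYY
  have eY : ∫ p in Q, K p.1 = h * YY := by
    have e1 := setIntegral_prod_mul (μ := volume) (ν := volume) K (fun _ => (1 : ℝ)) (Set.Ioc a (a + h)) (Set.Ioc c (c + h))
    rw [hYY, hQ, cell, Measure.volume_eq_prod]
    rw [setIntegral_prod (fun p => ‖dY u p‖ ^ 2) (cell_int _ (by fun_prop) a c h)]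
    simp only [mul_one] at e1
    rw [e1]
    simp only [hK, intervalIntegral.integral_of_le (show c ≤ c + h by linarith)]
    simp [hh.le]; ring
  have eX : ∫ p in Q, G p.2 = h * XX := by
    have e1 := setIntegral_prod_mul (μ := volume) (ν := volume) (fun _ => (1 : ℝ)) G (Set.Ioc a (a + h)) (Set.Ioc c (c + h))
    rw [hXX, hQ, cell, Measure.volume_eq_prod]
    rw [setIntegral_prod (fun p => ‖dX u p‖ ^ 2) (cell_int _ (by fun_prop) a c h)]
    rw [integral_integral_swap (f := fun x y => ‖dX u (x, y)‖ ^ 2) (by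
      have := cell_int (fun p => ‖dX u p‖ ^ 2) (by fun_prop) a c h
      rw [IntegrableOn, cell, Measure.volume_eq_prod, ← Measure.prod_restrict] at this
      exact this)]
    simp only [one_mul] at e1
    rw [e1]
    simp only [hG, intervalIntegral.integral_of_le (show a ≤ a + h by linarith)]
    simp [hh.le]
  have cv : ∀ t : ℝ, ∫ p in Q, (fun _ : ℝ × ℝ => t) p = h ^ 2 * t := by
    intro t
    rw [integral_const, measureReal_restrict_apply_univ, cell_vol _ _ _ hh.le, smul_eq_mul]
  have key : ∀ p ∈ Q, ‖u p‖ ^ 2 ≤ 2 * h * G p.2 + 2 * YY := by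
    intro p hp
    have i1 : ∫ p' in Q, (u p - u p') = h ^ 2 * u p := by
      rw [integral_sub (cell_int _ continuous_const a c h) (cell_int u cu a c h), h0, sub_zero,
        integral_const]
      rw [measureReal_restrict_apply_univ, cell_vol _ _ _ hh.le]
      simp
    have hfin : IsFiniteMeasure (volume.restrict Q) := ⟨by
      rw [Measure.restrict_apply_univ, hQ, cell, Measure.volume_eq_prod, Measure.prod_prod]
      simp [ENNReal.mul_lt_top]⟩
    have i2 := int_cs (volume.restrict Q) (fun p' => u p - u p') (cell_int _ (by fun_prop) a c h)
      (cell_int _ (by fun_prop) a c h)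
    rw [i1, measureReal_restrict_apply_univ, cell_vol _ _ _ hh.le] at i2
    have i3 : ∫ p' in Q, ‖u p - u p'‖ ^ 2 ≤ ∫ p' in Q, (2 * h * G p.2 + 2 * h * K p'.1) := by
      apply setIntegral_mono_on (cell_int _ (by fun_prop) a c h) (cell_int _ (by fun_prop) a c h) (cell_meas _ _ _)
      intro p' hp'
      have j1 := oned (fun s => u (s, p.2)) (fun s => dX u (s, p.2)) (fun x => dx x p.2) (by fun_prop) hh.le hp.1 hp'.1
      have j2 := oned (fun s => u (p'.1, s)) (fun s => dY u (p'.1, s)) (fun x => dy p'.1 x) (by fun_prop) hh.le hp.2 hp'.2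
      have j3 : ‖u p - u p'‖ ≤ ‖u (p.1, p.2) - u (p'.1, p.2)‖ + ‖u (p'.1, p.2) - u (p'.1, p'.2)‖ :=
        norm_sub_le_norm_sub_add_norm_sub _ _ _
      have j4 : ‖u p - u p'‖ ^ 2 ≤ (‖u (p.1, p.2) - u (p'.1, p.2)‖ + ‖u (p'.1, p.2) - u (p'.1, p'.2)‖) ^ 2 := by
        gcongr
      have j5 := add_sq_le (a := ‖u (p.1, p.2) - u (p'.1, p.2)‖) (b := ‖u (p'.1, p.2) - u (p'.1, p'.2)‖)
      simp only [hG, hK]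
      linarith
    have i7 : ∫ p' in Q, (2 * h * G p.2 + 2 * h * K p'.1) = h ^ 2 * (2 * h * G p.2) + 2 * h * (h * YY) := by
      rw [integral_add (cell_int (fun _ => 2 * h * G p.2) (by fun_prop) a c h)
        (cell_int (fun p' => 2 * h * K p'.1) (by fun_prop) a c h), ← hQ, ← eY, ← integral_const_mul, ← cv]
    rw [i7] at i3
    have i4 : ‖(h : ℂ) ^ 2 * u p‖ ^ 2 = h ^ 2 * (h ^ 2 * ‖u p‖ ^ 2) := by
      rw [norm_mul, norm_pow, Complex.norm_real, Real.norm_eq_abs, sq_abs]; ring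
    rw [i4] at i2
    have i5 := le_of_mul_le_mul_left i2 (by positivity)
    have i6 : h ^ 2 * ‖u p‖ ^ 2 ≤ h ^ 2 * (2 * h * G p.2 + 2 * YY) := by
      refine (i5.trans i3).trans (le_of_eq ?_); ring
    exact le_of_mul_le_mul_left i6 (by positivity)
  have fin := setIntegral_mono_on (cell_int (fun p => ‖u p‖ ^ 2) (by fun_prop) a c h)
    (cell_int (fun p : ℝ × ℝ => 2 * h * G p.2 + 2 * YY) (by fun_prop) a c h) (cell_meas _ _ _) key
  have i8 : ∫ p in Q, (2 * h * G p.2 + 2 * YY) = 2 * h * (h * XX) + h ^ 2 * (2 * YY) := by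
    rw [integral_add (cell_int (fun p => 2 * h * G p.2) (by fun_prop) a c h)
      (cell_int (fun _ => 2 * YY) (by fun_prop) a c h), ← hQ, ← eX, integral_const_mul (2 * h), ← cv (2 * YY)]
  rw [← hQ, i8] at fin
  rw [integral_add (cell_int _ (by fun_prop) a c h) (cell_int _ (by fun_prop) a c h)]
  change _ ≤ 2 * h ^ 2 * (XX + YY)
  linarith


theorem bdd_ker (Ω : Set (ℝ × ℝ)) (h : ℝ) (S : Finset (ℤ × ℤ)) (V : Submodule ℂ (ℝ × ℝ → ℂ))
    (hVt : (V : Set (ℝ × ℝ → ℂ)) ⊆ {u | IsTestOn Ω u}) (hlt : S.card < Module.finrank ℂ V) :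
    ∃ u ∈ V, u ≠ 0 ∧ ∀ i ∈ S, ∫ p in cell (i.1 * h) (i.2 * h) h, u p = 0 := by
  have hfd : FiniteDimensional ℂ V := Module.finite_of_finrank_pos (by omega)
  let T : V →ₗ[ℂ] (S → ℂ) :=
    { toFun := fun u i => ∫ p in cell (i.1.1 * h) (i.1.2 * h) h, (u : ℝ × ℝ → ℂ) p
      map_add' := by
        intro u v
        ext i
        exact integral_add (cell_int _ (hVt u.2).1.continuous _ _ _) (cell_int _ (hVt v.2).1.continuous _ _ _)
      map_smul' := by
        intro a u
        ext i
        exact integral_const_mul a _ }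
  have hker : LinearMap.ker T ≠ ⊥ := LinearMap.ker_ne_bot_of_finrank_lt (by simpa using hlt)
  obtain ⟨u, huk, hu0⟩ := Submodule.exists_mem_ne_zero_of_ne_bot hker
  obtain ⟨u, huV⟩ := u
  exact ⟨u, huV, fun h => hu0 (by ext1; exact h), fun i hi => congrFun (LinearMap.mem_ker.mp huk) ⟨i, hi⟩⟩

theorem bdd_geo (R h : ℝ) (h0 : 0 < h) : ∃ S : Finset (ℤ × ℤ),
    (S : Set (ℤ × ℤ)).Pairwise (Function.onFun Disjoint fun i : ℤ × ℤ => cell (i.1 * h) (i.2 * h) h) ∧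
    ∀ p : ℝ × ℝ, |p.1| ≤ R → |p.2| ≤ R → p ∈ ⋃ i ∈ S, cell (i.1 * h) (i.2 * h) h := by
  obtain ⟨n, hn⟩ := exists_nat_ge (R / h + 2)
  have mem1 : ∀ x : ℝ, |x| ≤ R → ∃ i ∈ Finset.Icc (-(n : ℤ)) n, x ∈ Set.Ioc ((i : ℝ) * h) (i * h + h) := by
    intro x hx
    have hx' : |x / h| ≤ R / h := by rw [abs_div, abs_of_pos h0]; gcongr
    have hx2 := abs_le.mp hx'
    have c1 := Int.le_ceil (x / h)
    have c2 := Int.ceil_lt_add_one (x / h)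
    refine ⟨⌈x / h⌉ - 1, ?_, ?_, ?_⟩
    · rw [Finset.mem_Icc]
      constructor
      · have : (-(n : ℝ)) ≤ (⌈x / h⌉ : ℝ) - 1 := by linarith
        exact_mod_cast this
      · have : (⌈x / h⌉ : ℝ) - 1 ≤ n := by linarith
        exact_mod_cast this
    · push_cast
      rw [← lt_div_iff₀ h0]; linarith
    · push_cast
      have : x = x / h * h := by field_simp
      nlinarith
  have uni : ∀ (i j : ℤ) (x : ℝ), x ∈ Set.Ioc ((i : ℝ) * h) (i * h + h) →
      x ∈ Set.Ioc ((j : ℝ) * h) (j * h + h) → i ≤ j := by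
    intro i j x hi hj
    have a1 : (i : ℝ) * h < (j + 1) * h := by linarith [hi.1, hj.2]
    have a2 := lt_of_mul_lt_mul_right a1 h0.le
    have : i < j + 1 := by exact_mod_cast a2
    omega
  refine ⟨Finset.Icc (-(n : ℤ)) n ×ˢ Finset.Icc (-(n : ℤ)) n, ?_, ?_⟩
  · intro i _ j _ hij
    rw [Function.onFun, Set.disjoint_left]
    intro p hp hp'
    apply hij
    ext
    · exact le_antisymm (uni _ _ _ hp.1 hp'.1) (uni _ _ _ hp'.1 hp.1)
    · exact le_antisymm (uni _ _ _ hp.2 hp'.2) (uni _ _ _ hp'.2 hp.2)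
  · intro p hp1 hp2
    obtain ⟨i, hi, hi'⟩ := mem1 p.1 hp1
    obtain ⟨j, hj, hj'⟩ := mem1 p.2 hp2
    simp only [Set.mem_iUnion]
    exact ⟨(i, j), Finset.mem_product.mpr ⟨hi, hj⟩, hi', hj'⟩

theorem sq_int (f : ℝ × ℝ → ℂ) (hf : Continuous f) (hs : HasCompactSupport f) : Integrable (fun p => ‖f p‖ ^ 2) := by
  have h1 : HasCompactSupport (fun p => ‖f p‖ ^ 2) :=
    HasCompactSupport.comp_left (g := fun z : ℂ => ‖z‖ ^ 2) hs (by simp)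
  have h2 : Continuous (fun p => ‖f p‖ ^ 2) := by fun_prop
  exact h2.integrable_of_hasCompactSupport h1

theorem grad_bd (b R : ℝ) (Ω : Set (ℝ × ℝ)) (hsub : ∀ p ∈ Ω, |p.1| ≤ R ∧ |p.2| ≤ R) (u : ℝ × ℝ → ℂ)
    (hut : IsTestOn Ω u) : ∫ p : ℝ × ℝ, (‖dX u p‖ ^ 2 + ‖dY u p‖ ^ 2) ≤
      2 * qb b u + 4 * (b * R) ^ 2 * ∫ p : ℝ × ℝ, ‖u p‖ ^ 2 := by
  have iu := sq_int u hut.1.continuous hut.2.1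
  have iX := sq_int (dX u) (cont_dir hut.1 (1, 0)) (supp_dir hut.2.1 (1, 0))
  have iY := sq_int (dY u) (cont_dir hut.1 (0, 1)) (supp_dir hut.2.1 (0, 1))
  have i1 := sq_int _ (D1_cont b hut).1 (D1_cont b hut).2
  have i2 := sq_int _ (D2_cont b hut).1 (D2_cont b hut).2
  have e3 : 2 * qb b u + 4 * (b * R) ^ 2 * ∫ p : ℝ × ℝ, ‖u p‖ ^ 2
      = ∫ p, (2 * (‖D1 b u p‖ ^ 2 + ‖D2 b u p‖ ^ 2) + 4 * (b * R) ^ 2 * ‖u p‖ ^ 2) := by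
    have k1 : Integrable (fun p => 2 * (‖D1 b u p‖ ^ 2 + ‖D2 b u p‖ ^ 2)) := (i1.add i2).const_mul 2
    have k2 : Integrable (fun p => 4 * (b * R) ^ 2 * ‖u p‖ ^ 2) := iu.const_mul _
    rw [integral_add k1 k2, integral_const_mul, integral_const_mul]
    rfl
  rw [e3]
  apply integral_mono (iX.add iY) (((i1.add i2).const_mul 2).add (iu.const_mul _))
  intro p
  have aux : ∀ (r : ℝ) (z w : ℂ), |r| ≤ R → ‖z‖ ≤ ‖w‖ + ‖((b * r / 2 : ℝ) : ℂ) * u p‖ → ‖z‖ ^ 2 ≤ 2 * ‖w‖ ^ 2 + 2 * (b * R) ^ 2 * ‖u p‖ ^ 2 := by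
    intro r z w hr hz
    have hRn : r ^ 2 ≤ R ^ 2 := by
      rw [← sq_abs r]; gcongr
    have f1 : ‖((b * r / 2 : ℝ) : ℂ) * u p‖ ^ 2 ≤ (b * R) ^ 2 * ‖u p‖ ^ 2 := by
      rw [norm_mul, mul_pow, Complex.norm_real, Real.norm_eq_abs, sq_abs]
      refine mul_le_mul_of_nonneg_right ?_ (sq_nonneg _)
      nlinarith [sq_nonneg (b * r), mul_le_mul_of_nonneg_left hRn (sq_nonneg b)]
    have f2 : ‖z‖ ^ 2 ≤ (‖w‖ + ‖((b * r / 2 : ℝ) : ℂ) * u p‖) ^ 2 := by gcongr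
    have f3 := add_sq_le (a := ‖w‖) (b := ‖((b * r / 2 : ℝ) : ℂ) * u p‖)
    linarith
  by_cases hp : p ∈ tsupport u
  · have hp' := hsub p (hut.2.2 hp)
    have g1 := aux p.2 (dX u p) (D1 b u p) hp'.2 (by
      have : ‖dX u p‖ = ‖D1 b u p + ((b * p.2 / 2 : ℝ) : ℂ) * u p‖ := by
        unfold D1; rw [sub_add_cancel]; simp
      rw [this]; exact norm_add_le _ _)
    have g2 := aux p.1 (dY u p) (D2 b u p) hp'.1 (by
      have : ‖dY u p‖ = ‖D2 b u p - ((b * p.1 / 2 : ℝ) : ℂ) * u p‖ := by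
        unfold D2; rw [add_sub_cancel_right]; simp
      rw [this]; exact norm_sub_le _ _)
    show ‖dX u p‖ ^ 2 + ‖dY u p‖ ^ 2 ≤ 2 * (‖D1 b u p‖ ^ 2 + ‖D2 b u p‖ ^ 2) + 4 * (b * R) ^ 2 * ‖u p‖ ^ 2
    linarith
  · have hf : fderiv ℝ u p = 0 := by
      have := tsupport_fderiv_subset ℝ (f := u)
      exact image_eq_zero_of_notMem_tsupport fun hh => hp (this hh)
    show ‖dX u p‖ ^ 2 + ‖dY u p‖ ^ 2 ≤ 2 * (‖D1 b u p‖ ^ 2 + ‖D2 b u p‖ ^ 2) + 4 * (b * R) ^ 2 * ‖u p‖ ^ 2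
    have z1 : dX u p = 0 := by rw [dX, hf]; rfl
    have z2 : dY u p = 0 := by rw [dY, hf]; rfl
    rw [z1, z2]
    have z3 : 0 ≤ 2 * (‖D1 b u p‖ ^ 2 + ‖D2 b u p‖ ^ 2) + 4 * (b * R) ^ 2 * ‖u p‖ ^ 2 := by positivity
    simpa using z3

theorem poin_sum (R h : ℝ) (h0 : 0 < h) (Ω : Set (ℝ × ℝ)) (hsub : ∀ p ∈ Ω, |p.1| ≤ R ∧ |p.2| ≤ R) (u : ℝ × ℝ → ℂ)
    (hut : IsTestOn Ω u) (S : Finset (ℤ × ℤ))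
    (hdisj : (S : Set (ℤ × ℤ)).Pairwise (Function.onFun Disjoint fun i : ℤ × ℤ => cell (i.1 * h) (i.2 * h) h))
    (hcov : ∀ p : ℝ × ℝ, |p.1| ≤ R → |p.2| ≤ R → p ∈ ⋃ i ∈ S, cell (i.1 * h) (i.2 * h) h)
    (hz : ∀ i ∈ S, ∫ p in cell (i.1 * h) (i.2 * h) h, u p = 0) :
    ∫ p : ℝ × ℝ, ‖u p‖ ^ 2 ≤ 2 * h ^ 2 * ∫ p : ℝ × ℝ, (‖dX u p‖ ^ 2 + ‖dY u p‖ ^ 2) := by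
  have cu := hut.1.continuous
  have cX : Continuous (dX u) := cont_dir hut.1 (1, 0)
  have cY : Continuous (dY u) := cont_dir hut.1 (0, 1)
  have iX := sq_int (dX u) (cont_dir hut.1 (1, 0)) (supp_dir hut.2.1 (1, 0))
  have iY := sq_int (dY u) (cont_dir hut.1 (0, 1)) (supp_dir hut.2.1 (0, 1))
  have e1 : ∫ p : ℝ × ℝ, ‖u p‖ ^ 2 = ∑ i ∈ S, ∫ p in cell (i.1 * h) (i.2 * h) h, ‖u p‖ ^ 2 := by
    rw [← integral_biUnion_finset S (fun i _ => cell_meas _ _ _) hdisj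
      (fun i _ => cell_int _ (by fun_prop) _ _ _), setIntegral_eq_integral_of_forall_compl_eq_zero]
    intro p hp
    have : p ∉ tsupport u := fun hh => hp (hcov p (hsub p (hut.2.2 hh)).1 (hsub p (hut.2.2 hh)).2)
    rw [image_eq_zero_of_notMem_tsupport this]; simp
  have e2 : ∑ i ∈ S, ∫ p in cell (i.1 * h) (i.2 * h) h, (‖dX u p‖ ^ 2 + ‖dY u p‖ ^ 2)
      ≤ ∫ p : ℝ × ℝ, (‖dX u p‖ ^ 2 + ‖dY u p‖ ^ 2) := by
    rw [← integral_biUnion_finset S (fun i _ => cell_meas _ _ _) hdisj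
      (fun i _ => cell_int _ (by fun_prop) _ _ _)]
    exact setIntegral_le_integral (iX.add iY) (Filter.Eventually.of_forall fun p =>
      add_nonneg (sq_nonneg _) (sq_nonneg _))
  rw [e1]
  calc _ ≤ ∑ i ∈ S, 2 * h ^ 2 * ∫ p in cell (i.1 * h) (i.2 * h) h, (‖dX u p‖ ^ 2 + ‖dY u p‖ ^ 2) :=
        Finset.sum_le_sum fun i hi => poincare u hut.1 _ _ h h0 (hz i hi)
    _ ≤ _ := by rw [← Finset.mul_sum]; gcongr

theorem bdd_set (b lam R₁ R₂ : ℝ) (h1 : 0 < R₁) (h2 : 0 < R₂) :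
    BddAbove {n : ℕ | ∃ V : Submodule ℂ (ℝ × ℝ → ℂ), (V : Set (ℝ × ℝ → ℂ)) ⊆ {u | IsTestOn (rectR R₁ R₂) u} ∧
      Module.finrank ℂ V = n ∧ ∀ u ∈ V, u ≠ 0 → qb b u < lam * ∫ p : ℝ × ℝ, ‖u p‖ ^ 2} := by
  obtain ⟨R, hR⟩ : ∃ R, R = R₁ + R₂ := ⟨_, rfl⟩
  obtain ⟨c, hc⟩ : ∃ c, c = 2 * |lam| + 4 * (b * R) ^ 2 + 1 := ⟨_, rfl⟩
  have hc1 : 1 ≤ c := by have := abs_nonneg lam; rw [hc]; nlinarith [sq_nonneg (b * R)]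
  obtain ⟨h, hh⟩ : ∃ h, h = 1 / (2 * c) := ⟨_, rfl⟩
  have h0 : 0 < h := by rw [hh]; positivity
  have hhc : 2 * h ^ 2 * c ≤ 1 / 2 := by
    have : 2 * h ^ 2 * c = 1 / (2 * c) := by rw [hh]; field_simp; try ring
    rw [this]
    apply one_div_le_one_div_of_le <;> linarith
  obtain ⟨S, hdisj, hcov⟩ := bdd_geo R h h0
  have hsub : ∀ p ∈ rectR R₁ R₂, |p.1| ≤ R ∧ |p.2| ≤ R := by
    rintro ⟨x, y⟩ ⟨⟨a1, a2⟩, ⟨a3, a4⟩⟩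
    simp only at *
    constructor <;> rw [abs_le] <;> constructor <;> linarith
  refine ⟨S.card, ?_⟩
  rintro d ⟨V, hVt, hVd, hVn⟩
  by_contra! hlt
  obtain ⟨u, huV, hu0, hz⟩ := bdd_ker _ h S V hVt (by omega)
  have hut : IsTestOn (rectR R₁ R₂) u := hVt huV
  have hq := hVn u huV hu0
  have step1 := poin_sum R h h0 _ hsub u hut S hdisj hcov hz
  have step2 := grad_bd b R _ hsub u hut
  have hN0 : 0 ≤ ∫ p : ℝ × ℝ, ‖u p‖ ^ 2 := integral_nonneg fun p => sq_nonneg _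
  have hq0 : 0 ≤ qb b u := integral_nonneg fun p => add_nonneg (sq_nonneg _) (sq_nonneg _)
  generalize ∫ p : ℝ × ℝ, ‖u p‖ ^ 2 = N at *
  generalize ∫ p : ℝ × ℝ, (‖dX u p‖ ^ 2 + ‖dY u p‖ ^ 2) = E at *
  have hNpos : 0 < N := by
    rcases hN0.eq_or_lt with hh | hh
    · rw [← hh] at hq; linarith
    · exact hh
  have s3 : E ≤ c * N := by
    have := le_abs_self lam
    have : lam * N ≤ |lam| * N := by gcongr
    rw [hc]; nlinarith
  have s4 : N ≤ 1 / 2 * N := by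
    calc N ≤ 2 * h ^ 2 * E := step1
      _ ≤ 2 * h ^ 2 * (c * N) := by gcongr
      _ = 2 * h ^ 2 * c * N := by ring
      _ ≤ _ := by gcongr
  linarith


/-- Gaussian times polynomial -/
def gP (b : ℝ) (P : Polynomial ℂ) (y : ℝ) : ℂ := P.eval (y : ℂ) * Complex.exp ((-(b * y ^ 2 / 2) : ℝ) : ℂ)

/-- derivative polynomial -/
def dP (b : ℝ) (P : Polynomial ℂ) : Polynomial ℂ :=
  Polynomial.derivative P - Polynomial.C (b : ℂ) * (Polynomial.X * P)

theorem gP_norm (b : ℝ) (P : Polynomial ℂ) (y : ℝ) :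
    ‖gP b P y‖ ^ 2 = ‖P.eval (y : ℂ)‖ ^ 2 * Real.exp (-b * y ^ 2) := by
  rw [gP, norm_mul, mul_pow, Complex.norm_exp_ofReal, ← Real.exp_nat_mul]
  congr 2
  push_cast; ring

theorem gP_hasDerivAt (b : ℝ) (P : Polynomial ℂ) (y : ℝ) : HasDerivAt (gP b P) (gP b (dP b P) y) y := by
  have h1 : HasDerivAt (fun y : ℝ => P.eval (y : ℂ)) ((Polynomial.derivative P).eval (y : ℂ)) y :=
    (P.hasDerivAt (y : ℂ)).comp_ofReal
  have h2 : HasDerivAt (fun y : ℝ => -(b * y ^ 2 / 2)) (-(b * y)) y := by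
    have := ((((hasDerivAt_id y).pow 2).const_mul b).div_const 2).neg
    refine this.congr_deriv ?_
    simp; ring
  have h3 := h1.mul (h2.ofReal_comp.cexp)
  refine h3.congr_deriv ?_
  simp only [gP, dP, Polynomial.eval_sub, Polynomial.eval_mul, Polynomial.eval_C, Polynomial.eval_X]
  push_cast; ring

theorem gP_contDiff (b : ℝ) (P : Polynomial ℂ) {n : WithTop ℕ∞} : ContDiff ℝ n (gP b P) := by
  have h0 : ContDiff ℝ n (fun y : ℝ => (y : ℂ)) := Complex.ofRealCLM.contDiff
  have h1 : ContDiff ℝ n (fun y : ℝ => P.eval (y : ℂ)) := by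
    simp only [Polynomial.eval_eq_sum_range]
    exact ContDiff.sum fun i _ => contDiff_const.mul (h0.pow i)
  have h2 : ContDiff ℝ n (fun y : ℝ => -(b * y ^ 2 / 2)) := by fun_prop
  exact h1.mul (Complex.ofRealCLM.contDiff.comp h2).cexp

theorem gP_continuous (b : ℝ) (P : Polynomial ℂ) : Continuous (gP b P) := (gP_contDiff b P (n := 0)).continuous

theorem gP_mulX (b : ℝ) (P : Polynomial ℂ) (y : ℝ) : (y : ℂ) * gP b P y = gP b (Polynomial.X * P) y := by
  simp [gP]; ring

theorem gP_integrable {b : ℝ} (hb : 0 < b) (P : Polynomial ℂ) : Integrable (fun y => ‖gP b P y‖ ^ 2) := by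
  simp only [gP_norm]; exact gam_integrable hb P

theorem gP_int (b : ℝ) (P : Polynomial ℂ) : ∫ y, ‖gP b P y‖ ^ 2 = Gam b P := by
  simp only [gP_norm]; rfl

/-- phase -/
def ee (k X : ℝ) : ℂ := Complex.exp (((k * X : ℝ) : ℂ) * Complex.I)

theorem ee_norm (k X : ℝ) : ‖ee k X‖ = 1 := Complex.norm_exp_ofReal_mul_I _

theorem ee_contDiff (k : ℝ) {n : WithTop ℕ∞} : ContDiff ℝ n (ee k) := by
  have h2 : ContDiff ℝ n (fun y : ℝ => k * y) := by fun_prop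
  exact ((Complex.ofRealCLM.contDiff.comp h2).mul contDiff_const).cexp

theorem ee_hasDerivAt (k X : ℝ) : HasDerivAt (ee k) (Complex.I * k * ee k X) X := by
  have h2 : HasDerivAt (fun y : ℝ => k * y) k X := by simpa using (hasDerivAt_id X).const_mul k
  refine ((h2.ofReal_comp.mul_const Complex.I).cexp).congr_deriv ?_
  simp only [ee]; ring

/-- frequencies -/
def kk (L : ℝ) (l : ℕ) : ℝ := 2 * π * l / L

theorem ee_per {L : ℝ} (hL : 0 < L) (l : ℕ) (X : ℝ) : ee (kk L l) (X + L) = ee (kk L l) X := by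
  unfold ee
  have : (((kk L l * (X + L) : ℝ) : ℂ) * Complex.I) = ((kk L l * X : ℝ) : ℂ) * Complex.I + ((l : ℤ) : ℂ) * (2 * π * Complex.I) := by
    have : kk L l * (X + L) = kk L l * X + 2 * π * l := by rw [kk]; field_simp
    rw [this]; push_cast; ring
  rw [this, Complex.exp_add, Complex.exp_int_mul_two_pi_mul_I, mul_one]

theorem ee_orth {L : ℝ} (hL : 0 < L) (l l' : ℕ) :
    ∫ t in (0 : ℝ)..L, ee (kk L l) t * (starRingEnd ℂ) (ee (kk L l') t) = if l = l' then (L : ℂ) else 0 := by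
  have e : ∀ t, ee (kk L l) t * (starRingEnd ℂ) (ee (kk L l') t)
      = Complex.exp (((kk L l - kk L l' : ℝ) : ℂ) * Complex.I * t) := by
    intro t
    unfold ee
    rw [← Complex.exp_conj, ← Complex.exp_add]
    congr 1
    simp only [map_mul, Complex.conj_ofReal, Complex.conj_I]
    push_cast; ring
  simp only [e]
  split_ifs with h
  · subst h; simp
  · have hk : ((kk L l - kk L l' : ℝ) : ℂ) * Complex.I ≠ 0 := by
      apply mul_ne_zero _ Complex.I_ne_zero
      rw [Complex.ofReal_ne_zero, kk, kk, ← sub_div, ← mul_sub]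
      have : (l : ℝ) - l' ≠ 0 := by
        rw [sub_ne_zero]; exact_mod_cast h
      have := Real.pi_pos
      positivity
    rw [integral_exp_mul_complex hk]
    have : ((kk L l - kk L l' : ℝ) : ℂ) * Complex.I * L = (((l : ℤ) - l' : ℤ) : ℂ) * (2 * π * Complex.I) := by
      have : ((kk L l - kk L l' : ℝ) : ℂ) * Complex.I * L = (((kk L l - kk L l') * L : ℝ) : ℂ) * Complex.I := by
        push_cast; ring
      rw [this]
      have : (kk L l - kk L l') * L = 2 * π * (l - l') := by rw [kk, kk]; field_simp
      rw [this]; push_cast; ring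
    rw [this, Complex.exp_int_mul_two_pi_mul_I]
    simp

/-- trigonometric sums -/
def TS (L : ℝ) {D : ℕ} (a : Fin D → ℂ) (X : ℝ) : ℂ := ∑ l : Fin D, ee (kk L l) X * a l

theorem TS_continuous (L : ℝ) {D : ℕ} (a : Fin D → ℂ) : Continuous (TS L a) := by
  unfold TS
  exact continuous_finsetSum _ fun l _ => ((ee_contDiff _ (n := 0)).continuous).mul continuous_const

theorem TS_per {L : ℝ} (hL : 0 < L) {D : ℕ} (a : Fin D → ℂ) (X : ℝ) : TS L a (X + L) = TS L a X := by
  simp only [TS, ee_per hL]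

theorem TS_parseval {L : ℝ} (hL : 0 < L) {D : ℕ} (a : Fin D → ℂ) :
    ∫ t in (0 : ℝ)..L, ‖TS L a t‖ ^ 2 = L * ∑ l, ‖a l‖ ^ 2 := by
  have hce : ∀ k, Continuous (ee k) := fun k => (ee_contDiff k (n := 0)).continuous
  apply Complex.ofReal_injective
  rw [← intervalIntegral.integral_ofReal]
  have e : ∀ t, ((‖TS L a t‖ ^ 2 : ℝ) : ℂ)
      = ∑ l : Fin D, ∑ l' : Fin D, (a l * (starRingEnd ℂ) (a l')) * (ee (kk L l) t * (starRingEnd ℂ) (ee (kk L l') t)) := by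
    intro t
    rw [Complex.ofReal_pow, ← Complex.mul_conj', TS, map_sum, Finset.sum_mul_sum]
    refine Finset.sum_congr rfl fun l _ => Finset.sum_congr rfl fun l' _ => ?_
    rw [map_mul]; ring
  simp only [e]
  have hcc : ∀ l l' : Fin D, Continuous fun t => (a l * (starRingEnd ℂ) (a l')) * (ee (kk L l) t * (starRingEnd ℂ) (ee (kk L l') t)) := by
    intro l l'
    exact continuous_const.mul ((hce _).mul (Complex.continuous_conj.comp (hce _)))
  rw [intervalIntegral.integral_finsetSum fun l _ =>
    (continuous_finsetSum _ fun l' _ => hcc l l').intervalIntegrable _ _]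
  have : ∀ l : Fin D, ∫ t in (0 : ℝ)..L, ∑ l' : Fin D, (a l * (starRingEnd ℂ) (a l')) * (ee (kk L l) t * (starRingEnd ℂ) (ee (kk L l') t))
      = ((L * ‖a l‖ ^ 2 : ℝ) : ℂ) := by
    intro l
    rw [intervalIntegral.integral_finsetSum fun l' _ => (hcc l l').intervalIntegrable _ _]
    simp only [intervalIntegral.integral_const_mul, ee_orth hL]
    rw [Finset.sum_eq_single l]
    · rw [if_pos rfl, Complex.mul_conj']; push_cast; ring
    · intro l' _ h
      rw [if_neg (fun hh => h (Fin.ext hh.symm)), mul_zero]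
    · simp
  simp only [this]
  rw [Finset.mul_sum]; push_cast; rfl

theorem fib (G : ℝ × ℝ → ℂ) (hG : Continuous G) (hs : HasCompactSupport G) (v1 v2 : ℝ) :
    Integrable (fun Y => ∫ X, ‖G (X - v1, Y - v2)‖ ^ 2) ∧
      ∫ Y, ∫ X, ‖G (X - v1, Y - v2)‖ ^ 2 = ∫ p, ‖G p‖ ^ 2 := by
  have h1 := (sq_int G hG hs).comp_sub_right ((v1, v2) : ℝ × ℝ)
  have h2 := integral_sub_right_eq_self (μ := (volume : Measure (ℝ × ℝ))) (fun p => ‖G p‖ ^ 2) (v1, v2)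
  rw [Measure.volume_eq_prod] at h1
  refine ⟨h1.integral_prod_right, ?_⟩
  rw [← h2, Measure.volume_eq_prod, integral_prod_symm _ h1]
  rfl


theorem TS_mul (L : ℝ) {D : ℕ} (c : ℂ) (a : Fin D → ℂ) (X : ℝ) : c * TS L a X = TS L (fun l => c * a l) X := by
  simp only [TS, Finset.mul_sum]
  exact Finset.sum_congr rfl fun l _ => by ring

theorem TS_add (L : ℝ) {D : ℕ} (a a' : Fin D → ℂ) (X : ℝ) : TS L a X + TS L a' X = TS L (fun l => a l + a' l) X := by
  simp only [TS, ← Finset.sum_add_distrib]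
  exact Finset.sum_congr rfl fun l _ => by ring

/-- shifted profiles -/
def ff (b L : ℝ) {D : ℕ} (P : Fin D → Polynomial ℂ) (Y : ℝ) (l : Fin D) : ℂ := gP b (P l) (Y - kk L l / b)

theorem TS_dX (L : ℝ) {D : ℕ} (a : Fin D → ℂ) (X : ℝ) :
    HasDerivAt (TS L a) (TS L (fun l => Complex.I * kk L l * a l) X) X := by
  unfold TS
  refine (HasDerivAt.fun_sum fun l _ => (ee_hasDerivAt (kk L (l : Fin D)) X).mul_const (a l)).congr_deriv ?_
  exact Finset.sum_congr rfl fun l _ => by ring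

theorem TS_dY (b L : ℝ) {D : ℕ} (P : Fin D → Polynomial ℂ) (X Y : ℝ) :
    HasDerivAt (fun Y => TS L (ff b L P Y) X) (TS L (ff b L (fun l => dP b (P l)) Y) X) Y := by
  unfold TS ff
  exact HasDerivAt.fun_sum fun l _ => ((gP_hasDerivAt b (P l) _).comp_sub_const Y (kk L l / b)).const_mul _

theorem dX_has {u : ℝ × ℝ → ℂ} (hd : Differentiable ℝ u) (x y : ℝ) :
    HasDerivAt (fun s => u (s, y)) (dX u (x, y)) x := by
  have h1 : HasDerivAt (fun s : ℝ => (s, y)) ((1 : ℝ), (0 : ℝ)) x :=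
    (hasDerivAt_id x).prodMk (hasDerivAt_const x y)
  exact (hd (x, y)).hasFDerivAt.comp_hasDerivAt x h1

theorem dY_has {u : ℝ × ℝ → ℂ} (hd : Differentiable ℝ u) (x y : ℝ) :
    HasDerivAt (fun s => u (x, s)) (dY u (x, y)) y := by
  have h1 : HasDerivAt (fun s : ℝ => (x, s)) ((0 : ℝ), (1 : ℝ)) y :=
    (hasDerivAt_const y x).prodMk (hasDerivAt_id y)
  exact (hd (x, y)).hasFDerivAt.comp_hasDerivAt y h1

/-- trial functions -/
def Wf (b L s wx wy ax ay τ : ℝ) {D : ℕ} (P : Fin D → Polynomial ℂ) (p : ℝ × ℝ) : ℂ :=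
  Complex.exp (((-(b * p.1 * p.2 / 2) - b * (ay + τ) * p.1 : ℝ) : ℂ) * Complex.I) *
    ((ct wx L (p.1 + ax) : ℂ) * ((ct wy s (p.2 + ay) : ℂ) * TS L (ff b L P (p.2 + ay + τ)) (p.1 + ax)))

section
variable (b L s wx wy ax ay τ : ℝ) {D : ℕ} (P : Fin D → Polynomial ℂ)

theorem Wf_contDiff : ContDiff ℝ (⊤ : ℕ∞) (Wf b L s wx wy ax ay τ P) := by
  unfold Wf
  have h1 : ContDiff ℝ (⊤ : ℕ∞) (fun p : ℝ × ℝ => -(b * p.1 * p.2 / 2) - b * (ay + τ) * p.1) := by fun_prop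
  have h2 : ContDiff ℝ (⊤ : ℕ∞) (fun p : ℝ × ℝ => p.1 + ax) := by fun_prop
  have h3 : ContDiff ℝ (⊤ : ℕ∞) (fun p : ℝ × ℝ => p.2 + ay) := by fun_prop
  refine ((Complex.ofRealCLM.contDiff.comp h1).mul contDiff_const).cexp.mul
    ((Complex.ofRealCLM.contDiff.comp ((ct_contDiff wx L).comp h2)).mul
    ((Complex.ofRealCLM.contDiff.comp ((ct_contDiff wy s).comp h3)).mul ?_))
  unfold TS ff
  refine ContDiff.sum fun l _ => ((ee_contDiff _).comp h2).mul ((gP_contDiff _ _).comp ?_)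
  fun_prop

theorem Wf_test {R₁ R₂ : ℝ} (hwx : 0 < wx) (hwy : 0 < wy) (hax : ax = (L + wx) / 2) (hay : ay = (s + wy) / 2)
    (h1 : L + wx < R₁) (h2 : s + wy < R₂) : IsTestOn (rectR R₁ R₂) (Wf b L s wx wy ax ay τ P) := by
  have hsupp : Function.support (Wf b L s wx wy ax ay τ P) ⊆ Set.Icc (-ax) ax ×ˢ Set.Icc (-ay) ay := by
    intro p hp
    by_contra hn
    apply hp
    rw [Set.mem_prod, Set.mem_Icc, Set.mem_Icc] at hn
    unfold Wf
    by_cases c1 : p.1 < -ax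
    · rw [ct_left hwx (by linarith)]; simp
    by_cases c2 : ax < p.1
    · rw [ct_right hwx (by linarith)]; simp
    by_cases c3 : p.2 < -ay
    · rw [ct_left (L := s) hwy (by linarith)]; simp
    by_cases c4 : ay < p.2
    · rw [ct_right (L := s) hwy (by linarith)]; simp
    exact absurd ⟨⟨by linarith, by linarith⟩, by linarith, by linarith⟩ hn
  have hK : IsCompact (Set.Icc (-ax) ax ×ˢ Set.Icc (-ay) ay) := isCompact_Icc.prod isCompact_Icc
  refine ⟨Wf_contDiff _ _ _ _ _ _ _ _ _, HasCompactSupport.of_support_subset_isCompact hK hsupp, ?_⟩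
  refine (closure_minimal hsupp hK.isClosed).trans ?_
  apply Set.prod_mono <;> intro t ht <;> constructor <;> linarith [ht.1, ht.2]

theorem Wf_D1 (X Y : ℝ) : ‖D1 b (Wf b L s wx wy ax ay τ P) (X - ax, Y - (ay + τ))‖ =
    ‖(ct wx L X : ℂ) * TS L (fun l => ct wy s (Y - τ) * (((kk L l - b * Y : ℝ) : ℂ) * ff b L P Y l)) X +
      (ctd wx L X : ℂ) * TS L (fun l => ct wy s (Y - τ) * (-Complex.I * ff b L P Y l)) X‖ := by
  have hd : Differentiable ℝ (Wf b L s wx wy ax ay τ P) :=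
    (Wf_contDiff b L s wx wy ax ay τ P).differentiable (by simp)
  have h2 : HasDerivAt (fun x => Wf b L s wx wy ax ay τ P (x, Y - (ay + τ)))
      (dX (Wf b L s wx wy ax ay τ P) (X - ax, Y - (ay + τ))) (X - ax) :=
    dX_has hd _ _
  set y := Y - (ay + τ) with hy
  have e1 : y + ay + τ = Y := by rw [hy]; ring
  have e2 : y + ay = Y - τ := by rw [hy]; ring
  have h3 : HasDerivAt (fun x : ℝ => -(b * x * y / 2) - b * (ay + τ) * x) (-(b * y / 2) - b * (ay + τ)) (X - ax) := by
    have := ((((hasDerivAt_id (X - ax)).const_mul b).mul_const y).div_const 2).neg.sub ((hasDerivAt_id (X - ax)).const_mul (b * (ay + τ)))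
    exact this.congr_deriv (by simp)
  have h4 := (h3.ofReal_comp.mul_const Complex.I).cexp
  have h5 : HasDerivAt (fun x : ℝ => ((ct wx L (x + ax) : ℝ) : ℂ)) (ctd wx L X : ℂ) (X - ax) := by
    have := (ct_hasDerivAt wx L (X - ax + ax)).comp_add_const (X - ax) ax
    rw [sub_add_cancel] at this
    exact this.ofReal_comp
  have h6 : HasDerivAt (fun x : ℝ => TS L (ff b L P (y + ay + τ)) (x + ax))
      (TS L (fun l => Complex.I * kk L l * ff b L P (y + ay + τ) l) X) (X - ax) := by
    have := (TS_dX L (ff b L P (y + ay + τ)) (X - ax + ax)).comp_add_const (X - ax) ax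
    rw [sub_add_cancel] at this
    exact this
  have h7 := h4.fun_mul (h5.fun_mul (h6.const_mul ((ct wy s (y + ay) : ℝ) : ℂ)))
  have h8 := h2.unique h7
  have key : D1 b (Wf b L s wx wy ax ay τ P) (X - ax, y) =
      Complex.exp (((-(b * (X - ax) * y / 2) - b * (ay + τ) * (X - ax) : ℝ) : ℂ) * Complex.I) *
      ((ct wx L X : ℂ) * TS L (fun l => ct wy s (Y - τ) * (((kk L l - b * Y : ℝ) : ℂ) * ff b L P Y l)) X +
      (ctd wx L X : ℂ) * TS L (fun l => ct wy s (Y - τ) * (-Complex.I * ff b L P Y l)) X) := by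
    have t1 : TS L (fun l => ct wy s (Y - τ) * (((kk L l - b * Y : ℝ) : ℂ) * ff b L P Y l)) X
        = (ct wy s (Y - τ) : ℂ) * (-Complex.I * TS L (fun l => Complex.I * kk L l * ff b L P Y l) X + -(b * Y) * TS L (ff b L P Y) X) := by
      rw [TS_mul, TS_mul, TS_add, TS_mul]
      congr 1; ext l; push_cast
      linear_combination ((ct wy s (Y - τ) : ℂ) * kk L l * ff b L P Y l) * Complex.I_sq
    have t2 : TS L (fun l => ct wy s (Y - τ) * (-Complex.I * ff b L P Y l)) X
        = (ct wy s (Y - τ) : ℂ) * (-Complex.I * TS L (ff b L P Y) X) := by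
      rw [TS_mul, TS_mul]
    rw [t1, t2, D1, h8]
    simp only [Wf, e2, sub_add_cancel]
    generalize Complex.exp _ = z
    have e3 : (Y : ℂ) = y + ay + τ := by rw [← e1]; push_cast; ring
    rw [e3]
    push_cast
    linear_combination (-(z * (ct wx L X : ℂ) * ct wy s (Y - τ) * TS L (ff b L P Y) X * (-(b * y / 2) - b * (ay + τ)))) * Complex.I_sq
  rw [key, norm_mul, Complex.norm_exp_ofReal_mul_I, one_mul]

theorem Wf_D2 (X Y : ℝ) : ‖D2 b (Wf b L s wx wy ax ay τ P) (X - ax, Y - (ay + τ))‖ ^ 2 =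
    ct wx L X ^ 2 * ‖TS L (fun l => (ct wy s (Y - τ) : ℂ) * ff b L (fun l => dP b (P l)) Y l +
      (ctd wy s (Y - τ) : ℂ) * ff b L P Y l) X‖ ^ 2 := by
  have hd : Differentiable ℝ (Wf b L s wx wy ax ay τ P) :=
    (Wf_contDiff b L s wx wy ax ay τ P).differentiable (by simp)
  have h2 : HasDerivAt (fun y => Wf b L s wx wy ax ay τ P (X - ax, y))
      (dY (Wf b L s wx wy ax ay τ P) (X - ax, Y - (ay + τ))) (Y - (ay + τ)) :=
    dY_has hd _ _
  set y := Y - (ay + τ) with hy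
  have e1 : y + ay + τ = Y := by rw [hy]; ring
  have e1' : y + (ay + τ) = Y := by rw [hy]; ring
  have e2 : y + ay = Y - τ := by rw [hy]; ring
  have h3 : HasDerivAt (fun y : ℝ => -(b * (X - ax) * y / 2) - b * (ay + τ) * (X - ax)) (-(b * (X - ax) / 2)) y := by
    have := ((((hasDerivAt_id y).const_mul (b * (X - ax))).div_const 2).neg).sub_const (b * (ay + τ) * (X - ax))
    exact this.congr_deriv (by simp)
  have h4 := (h3.ofReal_comp.mul_const Complex.I).cexp
  have h5 : HasDerivAt (fun y : ℝ => ((ct wy s (y + ay) : ℝ) : ℂ)) (ctd wy s (Y - τ) : ℂ) y := by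
    have := (ct_hasDerivAt wy s (y + ay)).comp_add_const y ay
    rw [e2] at this
    exact this.ofReal_comp
  have h6 : HasDerivAt (fun y : ℝ => TS L (ff b L P (y + ay + τ)) X)
      (TS L (ff b L (fun l => dP b (P l)) Y) X) y := by
    have := (TS_dY b L P X (y + (ay + τ))).comp_add_const y (ay + τ)
    rw [e1'] at this
    simpa only [add_assoc] using this
  have h7 := h4.fun_mul ((h5.fun_mul h6).const_mul ((ct wx L X : ℝ) : ℂ))
  have h2' : HasDerivAt (fun y => Complex.exp (((-(b * (X - ax) * y / 2) - b * (ay + τ) * (X - ax) : ℝ) : ℂ) * Complex.I) *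
    ((ct wx L X : ℂ) * ((ct wy s (y + ay) : ℂ) * TS L (ff b L P (y + ay + τ)) X))) 
      (dY (Wf b L s wx wy ax ay τ P) (X - ax, y)) y := by
    have := h2
    simp only [Wf, sub_add_cancel] at this
    exact this
  have h8 := h2'.unique h7
  have key : D2 b (Wf b L s wx wy ax ay τ P) (X - ax, y) =
      Complex.exp (((-(b * (X - ax) * y / 2) - b * (ay + τ) * (X - ax) : ℝ) : ℂ) * Complex.I) * (-Complex.I) *
      ((ct wx L X : ℂ) * TS L (fun l => (ct wy s (Y - τ) : ℂ) * ff b L (fun l => dP b (P l)) Y l +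
      (ctd wy s (Y - τ) : ℂ) * ff b L P Y l) X) := by
    rw [← TS_add, ← TS_mul, ← TS_mul, D2, h8]
    simp only [Wf, e2, sub_add_cancel]
    generalize Complex.exp _ = z
    push_cast
    linear_combination (z * (ct wx L X : ℂ) * ct wy s (Y - τ) * TS L (ff b L P Y) X * ((b * (X - ax) / 2))) * Complex.I_sq
  rw [key, norm_mul, norm_mul, Complex.norm_exp_ofReal_mul_I, norm_mul, Complex.norm_real, norm_neg, Complex.norm_I,
    mul_one, one_mul, mul_pow, Real.norm_eq_abs, sq_abs]

theorem Wf_D0 (X Y : ℝ) : ‖Wf b L s wx wy ax ay τ P (X - ax, Y - (ay + τ))‖ ^ 2 =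
    ct wx L X ^ 2 * ‖TS L (fun l => (ct wy s (Y - τ) : ℂ) * ff b L P Y l) X‖ ^ 2 := by
  have e1 : Y - (ay + τ) + ay + τ = Y := by ring
  have e2 : Y - (ay + τ) + ay = Y - τ := by ring
  simp only [Wf, e2, sub_add_cancel]
  rw [← TS_mul, norm_mul, Complex.norm_exp_ofReal_mul_I, norm_mul, Complex.norm_real, one_mul, mul_pow]
  simp
end


section
variable {b L s wx wy : ℝ} (ax ay τ : ℝ) {D : ℕ} (P : Fin D → Polynomial ℂ)

theorem slice0 (hL : 0 < L) (hwx : 0 < wx) (hwxL : wx ≤ L) (Y : ℝ) :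
    ∫ X, ‖Wf b L s wx wy ax ay τ P (X - ax, Y - (ay + τ))‖ ^ 2 =
      L * ∑ l : Fin D, ct wy s (Y - τ) ^ 2 * ‖ff b L P Y l‖ ^ 2 := by
  simp only [Wf_D0]
  rw [per_sq hwx hwxL _ (TS_continuous L _) (TS_per hL _), TS_parseval hL]
  congr 1
  refine Finset.sum_congr rfl fun l _ => ?_
  rw [norm_mul, mul_pow, Complex.norm_real, Real.norm_eq_abs, sq_abs]

theorem slice2 (hL : 0 < L) (hwx : 0 < wx) (hwxL : wx ≤ L) (Y : ℝ) :
    ∫ X, ‖D2 b (Wf b L s wx wy ax ay τ P) (X - ax, Y - (ay + τ))‖ ^ 2 =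
      L * ∑ l : Fin D, ‖(ct wy s (Y - τ) : ℂ) * ff b L (fun l => dP b (P l)) Y l +
      (ctd wy s (Y - τ) : ℂ) * ff b L P Y l‖ ^ 2 := by
  simp only [Wf_D2]
  rw [per_sq hwx hwxL _ (TS_continuous L _) (TS_per hL _), TS_parseval hL]

theorem slice1 (hL : 0 < L) (hwx : 0 < wx) (hwxL : wx ≤ L) {M : ℝ} (hM : ∀ t, |deriv Th t| ≤ M) (Y : ℝ) :
    ∫ X, ‖D1 b (Wf b L s wx wy ax ay τ P) (X - ax, Y - (ay + τ))‖ ^ 2 ≤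
      L * ∑ l : Fin D, ct wy s (Y - τ) ^ 2 * (((kk L l - b * Y) ^ 2 + (M / wx) ^ 2) * ‖ff b L P Y l‖ ^ 2) := by
  simp only [Wf_D1]
  refine (per_en hwx hwxL hM _ _ (TS_continuous L _) (TS_per hL _) (TS_continuous L _) (TS_per hL _)).trans ?_
  have hc : ∀ a : Fin D → ℂ, IntervalIntegrable (fun t => ‖TS L a t‖ ^ 2) volume 0 L := fun a =>
    (((TS_continuous L a).norm).pow 2).intervalIntegrable _ _
  rw [intervalIntegral.integral_add (hc _) ((hc _).const_mul _),
    intervalIntegral.integral_const_mul, TS_parseval hL, TS_parseval hL, mul_left_comm, ← mul_add, Finset.mul_sum,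
    ← Finset.sum_add_distrib]
  apply le_of_eq
  congr 1
  refine Finset.sum_congr rfl fun l _ => ?_
  simp only [norm_mul, mul_pow, Complex.norm_real, Real.norm_eq_abs, sq_abs, norm_neg, Complex.norm_I]
  ring

end

section
variable {b L s wx wy : ℝ} (ax ay τ : ℝ) {D : ℕ} (P : Fin D → Polynomial ℂ)

/-- energy density of one mode -/
def Hd (b κ : ℝ) (Q : Polynomial ℂ) (y : ℝ) : ℝ :=
  b ^ 2 * ‖gP b (Polynomial.X * Q) y‖ ^ 2 + ‖gP b (dP b Q) y‖ ^ 2 + κ * ‖gP b Q y‖ ^ 2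

theorem Hd_integrable (hb : 0 < b) (κ : ℝ) (Q : Polynomial ℂ) : Integrable (Hd b κ Q) :=
  (((gP_integrable hb _).const_mul _).add (gP_integrable hb _)).add ((gP_integrable hb _).const_mul _)

theorem Hd_int (hb : 0 < b) (κ : ℝ) (Q : Polynomial ℂ) :
    ∫ y, Hd b κ Q y = b ^ 2 * Gam b (Polynomial.X * Q) + Gam b (dP b Q) + κ * Gam b Q := by
  have i1 := (gP_integrable hb (Polynomial.X * Q)).const_mul (b ^ 2)
  have i2 := gP_integrable hb (dP b Q)
  have i3 := (gP_integrable hb Q).const_mul κ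
  have i12 : Integrable (fun y => b ^ 2 * ‖gP b (Polynomial.X * Q) y‖ ^ 2 + ‖gP b (dP b Q) y‖ ^ 2) := i1.add i2
  unfold Hd
  rw [integral_add i12 i3, integral_add i1 i2, integral_const_mul, integral_const_mul, gP_int, gP_int, gP_int]

theorem ff_mul (hb : 0 < b) (Y : ℝ) (l : Fin D) : (kk L l - b * Y) ^ 2 * ‖ff b L P Y l‖ ^ 2
    = b ^ 2 * ‖gP b (Polynomial.X * P l) (Y - kk L l / b)‖ ^ 2 := by
  rw [← gP_mulX, norm_mul, mul_pow, Complex.norm_real, Real.norm_eq_abs, sq_abs, ff, ← mul_assoc]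
  congr 1
  field_simp
  ring

theorem energy {R₁ R₂ : ℝ} (hb : 0 < b) (hL : 0 < L) (hwx : 0 < wx) (hwxL : wx ≤ L) (hwy : 0 < wy) (hwys : wy ≤ s)
    {M : ℝ} (hM : ∀ t, |deriv Th t| ≤ M) (m : ℕ)
    (hT : ∀ τ, IsTestOn (rectR R₁ R₂) (Wf b L s wx wy ax ay τ P)) :
    ∑ j ∈ Finset.range m, qb b (Wf b L s wx wy ax ay (τ + j * s) P) ≤
      L * ∑ l : Fin D, (b ^ 2 * Gam b (Polynomial.X * P l) + Gam b (dP b (P l)) +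
        ((M / wx) ^ 2 + (M / wy) ^ 2) * Gam b (P l)) := by
  have f1 := fun j : ℕ => fib _ (D1_cont b (hT (τ + j * s))).1 (D1_cont b (hT (τ + j * s))).2 ax (ay + (τ + j * s))
  have f2 := fun j : ℕ => fib _ (D2_cont b (hT (τ + j * s))).1 (D2_cont b (hT (τ + j * s))).2 ax (ay + (τ + j * s))
  have hq : ∀ j : ℕ, qb b (Wf b L s wx wy ax ay (τ + j * s) P) =
      ∫ Y, ((∫ X, ‖D1 b (Wf b L s wx wy ax ay (τ + j * s) P) (X - ax, Y - (ay + (τ + j * s)))‖ ^ 2) +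
        ∫ X, ‖D2 b (Wf b L s wx wy ax ay (τ + j * s) P) (X - ax, Y - (ay + (τ + j * s)))‖ ^ 2) := by
    intro j
    rw [integral_add (f1 j).1 (f2 j).1, (f1 j).2, (f2 j).2,
      ← integral_add (sq_int _ (D1_cont b (hT (τ + j * s))).1 (D1_cont b (hT (τ + j * s))).2)
        (sq_int _ (D2_cont b (hT (τ + j * s))).1 (D2_cont b (hT (τ + j * s))).2)]
    rfl
  have f12 : ∀ j : ℕ, Integrable (fun Y => (∫ X, ‖D1 b (Wf b L s wx wy ax ay (τ + j * s) P) (X - ax, Y - (ay + (τ + j * s)))‖ ^ 2) +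
        ∫ X, ‖D2 b (Wf b L s wx wy ax ay (τ + j * s) P) (X - ax, Y - (ay + (τ + j * s)))‖ ^ 2) :=
    fun j => (f1 j).1.add (f2 j).1
  simp only [hq]
  rw [← integral_finsetSum _ fun j _ => f12 j]
  have hB : ∀ l : Fin D, Integrable fun Y => Hd b ((M / wx) ^ 2 + (M / wy) ^ 2) (P l) (Y - kk L l / b) :=
    fun l => (Hd_integrable hb _ _).comp_sub_right _
  have hI : ∫ Y, L * ∑ l : Fin D, Hd b ((M / wx) ^ 2 + (M / wy) ^ 2) (P l) (Y - kk L l / b) =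
      L * ∑ l : Fin D, (b ^ 2 * Gam b (Polynomial.X * P l) + Gam b (dP b (P l)) +
        ((M / wx) ^ 2 + (M / wy) ^ 2) * Gam b (P l)) := by
    rw [integral_const_mul, integral_finsetSum _ fun l _ => hB l]
    congr 1
    refine Finset.sum_congr rfl fun l _ => ?_
    rw [integral_sub_right_eq_self (μ := volume) (Hd b ((M / wx) ^ 2 + (M / wy) ^ 2) (P l)), Hd_int hb]
  rw [← hI]
  refine integral_mono (integrable_finsetSum _ fun j _ => f12 j)
    ((integrable_finsetSum _ fun l _ => hB l).const_mul L) ?_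
  intro Y
  simp only
  calc _ ≤ ∑ j ∈ Finset.range m, (L * ∑ l : Fin D, ct wy s (Y - (τ + j * s)) ^ 2 * (((kk L l - b * Y) ^ 2 + (M / wx) ^ 2) * ‖ff b L P Y l‖ ^ 2)
        + L * ∑ l : Fin D, ‖(ct wy s (Y - (τ + j * s)) : ℂ) * ff b L (fun l => dP b (P l)) Y l +
      (ctd wy s (Y - (τ + j * s)) : ℂ) * ff b L P Y l‖ ^ 2) := by
        refine Finset.sum_le_sum fun j _ => add_le_add (slice1 ax ay _ P hL hwx hwxL hM Y) (slice2 ax ay _ P hL hwx hwxL Y).le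
    _ = L * ∑ l : Fin D, ((∑ j ∈ Finset.range m, ct wy s ((Y - τ) - j * s) ^ 2) * (((kk L l - b * Y) ^ 2 + (M / wx) ^ 2) * ‖ff b L P Y l‖ ^ 2)
        + ∑ j ∈ Finset.range m, ‖(ct wy s ((Y - τ) - j * s) : ℂ) * ff b L (fun l => dP b (P l)) Y l +
      (ctd wy s ((Y - τ) - j * s) : ℂ) * ff b L P Y l‖ ^ 2) := by
        simp only [← sub_sub, ← mul_add, ← Finset.mul_sum, ← Finset.sum_add_distrib, Finset.sum_mul]
        rw [Finset.sum_comm]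
        simp only [Finset.mul_sum, Finset.sum_add_distrib]
    _ ≤ _ := by
        refine mul_le_mul_of_nonneg_left (Finset.sum_le_sum fun l _ => ?_) hL.le
        have k1 := sum_ct_sq_le hwy hwys m (Y - τ)
        have k2 := sum_ct_en hwy hwys hM m (Y - τ) (ff b L (fun l => dP b (P l)) Y l) (ff b L P Y l)
        have k3 := ff_mul (L := L) P hb Y l
        have k4 := mul_le_mul_of_nonneg_right k1 (show 0 ≤ ((kk L l - b * Y) ^ 2 + (M / wx) ^ 2) * ‖ff b L P Y l‖ ^ 2 by positivity)
        have k5 : Hd b ((M / wx) ^ 2 + (M / wy) ^ 2) (P l) (Y - kk L l / b) = (kk L l - b * Y) ^ 2 * ‖ff b L P Y l‖ ^ 2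
          + ‖ff b L (fun l => dP b (P l)) Y l‖ ^ 2 + ((M / wx) ^ 2 + (M / wy) ^ 2) * ‖ff b L P Y l‖ ^ 2 := by
          rw [k3]; rfl
        rw [k5]
        linarith

theorem mass {R₁ R₂ : ℝ} (hb : 0 < b) (hL : 0 < L) (hwx : 0 < wx) (hwxL : wx ≤ L) (hwy : 0 < wy) (hwys : wy ≤ s)
    (m : ℕ) (hT : ∀ τ, IsTestOn (rectR R₁ R₂) (Wf b L s wx wy ax ay τ P)) {A : ℝ} (hA : 0 < A)
    (hm : ∀ l : Fin D, kk L l / b + 2 * A + s ≤ m * s) :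
    L * ∑ l : Fin D, (Gam b (P l) - Gam b (Polynomial.X * P l) / A ^ 2) ≤
    ∑ j ∈ Finset.range m, ∫ p, ‖Wf b L s wx wy ax ay ((-s - A) + j * s) P p‖ ^ 2 := by
  set τ := -s - A with hτ
  have f1 := fun j : ℕ => fib _ (hT (τ + j * s)).1.continuous (hT (τ + j * s)).2.1 ax (ay + (τ + j * s))
  simp only [← (f1 _).2]
  rw [← integral_finsetSum _ fun j _ => (f1 j).1]
  have hB : ∀ l : Fin D, Integrable fun y => ‖gP b (P l) y‖ ^ 2 - ‖gP b (Polynomial.X * P l) y‖ ^ 2 / A ^ 2 :=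
    fun l => (gP_integrable hb _).sub ((gP_integrable hb _).div_const _)
  have hI : ∫ Y, L * ∑ l : Fin D, (‖gP b (P l) (Y - kk L l / b)‖ ^ 2 - ‖gP b (Polynomial.X * P l) (Y - kk L l / b)‖ ^ 2 / A ^ 2)
      = L * ∑ l : Fin D, (Gam b (P l) - Gam b (Polynomial.X * P l) / A ^ 2) := by
    rw [integral_const_mul, integral_finsetSum _ fun l _ => (hB l).comp_sub_right _]
    congr 1
    refine Finset.sum_congr rfl fun l _ => ?_
    rw [integral_sub_right_eq_self (μ := volume) (fun y => ‖gP b (P l) y‖ ^ 2 - ‖gP b (Polynomial.X * P l) y‖ ^ 2 / A ^ 2),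
      integral_sub (gP_integrable hb _) ((gP_integrable hb _).div_const _), integral_div, gP_int, gP_int]
  rw [← hI]
  refine integral_mono ((integrable_finsetSum _ fun l _ => (hB l).comp_sub_right _).const_mul L)
    (integrable_finsetSum _ fun j _ => (f1 j).1) ?_
  intro Y
  simp only [slice0 ax ay _ P hL hwx hwxL Y]
  rw [← Finset.mul_sum, Finset.sum_comm]
  refine mul_le_mul_of_nonneg_left (Finset.sum_le_sum fun l _ => ?_) hL.le
  rw [← Finset.sum_mul, ← gP_mulX, norm_mul, mul_pow, Complex.norm_real, Real.norm_eq_abs, sq_abs]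
  simp only [← sub_sub]
  have hk : 0 ≤ kk L l / b := by unfold kk; have := Real.pi_pos; positivity
  have e : ‖gP b (P l) (Y - kk L l / b)‖ ^ 2 - (Y - kk L l / b) ^ 2 * ‖gP b (P l) (Y - kk L l / b)‖ ^ 2 / A ^ 2
      = (1 - (Y - kk L l / b) ^ 2 / A ^ 2) * ‖ff b L P Y l‖ ^ 2 := by rw [ff]; ring
  rw [e]
  refine mul_le_mul_of_nonneg_right ?_ (sq_nonneg _)
  by_cases h : |Y - kk L l / b| ≤ A
  · have h' := abs_le.mp h
    rw [sum_ct_sq_eq hwy hwys m (Y - τ) (by rw [hτ]; linarith) (by rw [hτ]; have := hm l; linarith)]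
    have : 0 ≤ (Y - kk L l / b) ^ 2 / A ^ 2 := by positivity
    linarith
  · push Not at h
    have h1 : A ^ 2 ≤ (Y - kk L l / b) ^ 2 := by
      rw [← sq_abs (Y - kk L l / b)]; gcongr
    have h2 : 1 ≤ (Y - kk L l / b) ^ 2 / A ^ 2 := by rw [le_div_iff₀ (by positivity)]; linarith
    have : 0 ≤ ∑ j ∈ Finset.range m, ct wy s (Y - τ - j * s) ^ 2 := Finset.sum_nonneg fun j _ => sq_nonneg _
    linarith
end


/-- the linear family of trial functions -/
def Wlin (b L s wx wy ax ay τ : ℝ) (D K : ℕ) :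
    (Fin D → Polynomial.degreeLT ℂ K) →ₗ[ℂ] (ℝ × ℝ → ℂ) where
  toFun c := Wf b L s wx wy ax ay τ fun l => (c l : Polynomial ℂ)
  map_add' c d := by
    funext p
    simp only [Wf, TS, ff, gP, Pi.add_apply, Submodule.coe_add, Polynomial.eval_add, add_mul, mul_add,
      Finset.sum_add_distrib]
  map_smul' a c := by
    funext p
    simp only [Wf, TS, ff, gP, Pi.smul_apply, Submodule.coe_smul, Polynomial.eval_smul, smul_eq_mul,
      Finset.mul_sum, RingHom.id_apply]
    refine Finset.sum_congr rfl fun l _ => ?_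
    ring

theorem dim_F (D K : ℕ) : Module.finrank ℂ (Fin D → Polynomial.degreeLT ℂ K) = D * K := by
  rw [Module.finrank_pi_fintype]
  simp [(Polynomial.degreeLTEquiv ℂ K).finrank_eq]

instance fin_F (K : ℕ) : FiniteDimensional ℂ (Polynomial.degreeLT ℂ K) :=
  (Polynomial.degreeLTEquiv ℂ K).symm.finiteDimensional

theorem arch_lim {k β γ : ℝ} (h : ∀ D : ℕ, D * k ≤ D * β + γ) : k ≤ β := by
  by_contra hn
  push Not at hn
  obtain ⟨D, hD⟩ := exists_nat_gt (γ / (k - β))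
  rw [div_lt_iff₀ (by linarith)] at hD
  have := h D
  linarith

theorem step {b L s wx wy R₁ R₂ lam M A : ℝ} (hb : 0 < b) (hL : 0 < L) (hwx : 0 < wx) (hwxL : wx ≤ L) (hwy : 0 < wy)
    (hwys : wy ≤ s) (hM : ∀ t, |deriv Th t| ≤ M) (h1 : L + wx < R₁) (h2 : s + wy < R₂) (n D m : ℕ) (hA : 0 < A)
    (hlam : (2 * n + 1) * b + ((M / wx) ^ 2 + (M / wy) ^ 2) < lam * (1 - (2 * n + 1) / (b * A ^ 2)))
    (hl0 : 0 < lam)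
    (hm : ∀ l : Fin D, kk L l / b + 2 * A + s ≤ m * s) :
    D * (n + 1) ≤ m * NNb b lam (rectR R₁ R₂) := by
  have hT : ∀ (P : Fin D → Polynomial ℂ) τ, IsTestOn (rectR R₁ R₂) (Wf b L s wx wy ((L + wx) / 2) ((s + wy) / 2) τ P) :=
    fun P τ => Wf_test _ _ _ _ _ _ _ _ _ hwx hwy rfl rfl h1 h2
  rw [← dim_F D (n + 1)]
  refine test_count (rectR R₁ R₂) b lam (bdd_set b lam R₁ R₂ (by linarith) (by linarith)) m
    (fun j => Wlin b L s wx wy ((L + wx) / 2) ((s + wy) / 2) ((-s - A) + j * s) D (n + 1))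
    (fun j c => hT _ _) ?_
  intro c hc
  set P : Fin D → Polynomial ℂ := fun l => (c l : Polynomial ℂ) with hP
  have e := energy ((L + wx) / 2) ((s + wy) / 2) (-s - A) P hb hL hwx hwxL hwy hwys hM m (hT P)
  have ma := mass ((L + wx) / 2) ((s + wy) / 2) P hb hL hwx hwxL hwy hwys m (hT P) hA hm
  have hdeg : ∀ l, (P l).natDegree ≤ n := by
    intro l
    have := Polynomial.mem_degreeLT.mp (c l).2
    by_cases h0 : P l = 0
    · rw [h0]; simp
    · have h3 := (Polynomial.natDegree_lt_iff_degree_lt h0).mpr this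
      omega
  have hg := fun l => gam_energy hb n (P l) (hdeg l)
  have hS : 0 < ∑ l, Gam b (P l) := by
    obtain ⟨l, hl⟩ := Function.ne_iff.mp hc
    refine Finset.sum_pos' (fun l _ => gam_nonneg b _) ⟨l, Finset.mem_univ _, gam_pos hb _ ?_⟩
    intro h; apply hl; exact Subtype.ext h
  have e2 : ∑ l : Fin D, (b ^ 2 * Gam b (Polynomial.X * P l) + Gam b (dP b (P l)) +
        ((M / wx) ^ 2 + (M / wy) ^ 2) * Gam b (P l)) ≤ ((2 * n + 1) * b + ((M / wx) ^ 2 + (M / wy) ^ 2)) * ∑ l, Gam b (P l) := by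
    rw [Finset.mul_sum]
    refine Finset.sum_le_sum fun l _ => ?_
    have := hg l
    rw [← dP] at this
    linarith
  have m2 : (1 - (2 * n + 1) / (b * A ^ 2)) * ∑ l, Gam b (P l) ≤ ∑ l : Fin D, (Gam b (P l) - Gam b (Polynomial.X * P l) / A ^ 2) := by
    rw [Finset.mul_sum]
    refine Finset.sum_le_sum fun l _ => ?_
    have h3 := hg l
    have h4 := gam_nonneg b (Polynomial.derivative (P l) - Polynomial.C (b : ℂ) * (Polynomial.X * P l))
    have h5 : Gam b (Polynomial.X * P l) ≤ (2 * n + 1) / b * Gam b (P l) := by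
      rw [div_mul_eq_mul_div, le_div_iff₀ hb]
      have h6 : b * (Gam b (Polynomial.X * P l) * b) ≤ b * ((2 * n + 1) * Gam b (P l)) := by linarith
      exact le_of_mul_le_mul_left h6 hb
    have h7 : Gam b (Polynomial.X * P l) / A ^ 2 ≤ (2 * n + 1) / b * Gam b (P l) / A ^ 2 := by gcongr
    have h8 : (2 * n + 1) / b * Gam b (P l) / A ^ 2 = (2 * n + 1) / (b * A ^ 2) * Gam b (P l) := by field_simp
    rw [h8] at h7
    linarith
  calc _ ≤ _ := e
    _ ≤ L * (((2 * n + 1) * b + ((M / wx) ^ 2 + (M / wy) ^ 2)) * ∑ l, Gam b (P l)) := mul_le_mul_of_nonneg_left e2 hL.le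
    _ < L * ((lam * (1 - (2 * n + 1) / (b * A ^ 2))) * ∑ l, Gam b (P l)) := by gcongr
    _ = lam * (L * ((1 - (2 * n + 1) / (b * A ^ 2)) * ∑ l, Gam b (P l))) := by ring
    _ ≤ lam * (L * ∑ l : Fin D, (Gam b (P l) - Gam b (Polynomial.X * P l) / A ^ 2)) := by gcongr
    _ ≤ _ := mul_le_mul_of_nonneg_left ma hl0.le

theorem step2 {b L s wx wy R₁ R₂ lam M : ℝ} (hb : 0 < b) (hL : 0 < L) (hwx : 0 < wx) (hwxL : wx ≤ L) (hwy : 0 < wy)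
    (hwys : wy ≤ s) (hM : ∀ t, |deriv Th t| ≤ M) (h1 : L + wx < R₁) (h2 : s + wy < R₂) (n : ℕ)
    (hlam : (2 * n + 1) * b + ((M / wx) ^ 2 + (M / wy) ^ 2) < lam) (hl0 : 0 < lam) :
    b * (L * s) / (2 * π) * (n + 1 : ℝ) ≤ (NNb b lam (rectR R₁ R₂) : ℝ) := by
  have hs : 0 < s := by linarith
  have hpi := Real.pi_pos
  obtain ⟨A, hA, hA2⟩ : ∃ A : ℝ, 0 < A ∧
      (2 * n + 1) * b + ((M / wx) ^ 2 + (M / wy) ^ 2) < lam * (1 - (2 * n + 1) / (b * A ^ 2)) := by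
    have t1 : Tendsto (fun A : ℝ => b * A ^ 2) atTop atTop := (tendsto_pow_atTop two_ne_zero).const_mul_atTop hb
    have t2 : Tendsto (fun A : ℝ => lam * (1 - (2 * n + 1 : ℝ) / (b * A ^ 2))) atTop (nhds (lam * (1 - 0))) :=
      (tendsto_const_nhds.sub (tendsto_const_nhds.div_atTop t1)).const_mul lam
    rw [sub_zero, mul_one] at t2
    obtain ⟨A, h, h'⟩ := ((eventually_gt_atTop (0 : ℝ)).and (t2.eventually_const_lt hlam)).exists
    exact ⟨A, h, h'⟩
  set N : ℝ := (NNb b lam (rectR R₁ R₂) : ℝ) with hN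
  have hN0 : 0 ≤ N := Nat.cast_nonneg _
  have key : ∀ D : ℕ, D * (n + 1 : ℝ) ≤ D * (2 * π / (b * L * s) * N) + (2 * A / s + 2) * N := by
    intro D
    set m : ℕ := ⌈(2 * π * D / L / b + 2 * A) / s⌉₊ + 1 with hm
    have hx : 0 ≤ (2 * π * D / L / b + 2 * A) / s := by positivity
    have hm1 : (2 * π * D / L / b + 2 * A) / s ≤ (m : ℝ) - 1 := by
      have := Nat.le_ceil ((2 * π * D / L / b + 2 * A) / s)
      rw [hm]; push_cast; linarith
    have hm2 : (m : ℝ) ≤ (2 * π * D / L / b + 2 * A) / s + 2 := by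
      have := Nat.ceil_lt_add_one hx
      rw [hm]; push_cast; linarith
    have h := step hb hL hwx hwxL hwy hwys hM h1 h2 n D m hA hA2 hl0 (by
      intro l
      rw [div_le_iff₀ hs] at hm1
      have hl : kk L l / b ≤ 2 * π * D / L / b := by
        unfold kk
        have : ((l : ℕ) : ℝ) ≤ D := by exact_mod_cast l.2.le
        gcongr
      linarith)
    have h' : (D : ℝ) * (n + 1) ≤ m * N := by rw [hN]; exact_mod_cast h
    refine h'.trans ((mul_le_mul_of_nonneg_right hm2 hN0).trans (le_of_eq ?_))
    field_simp
    ring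
  have := arch_lim key
  rw [div_mul_eq_mul_div, div_le_iff₀ (by positivity)]
  have h3 := mul_le_mul_of_nonneg_left this (show 0 ≤ b * (L * s) by positivity)
  refine h3.trans (le_of_eq ?_)
  field_simp


theorem landau_top {b μ : ℝ} (hb : 0 < b) {K : ℕ} (hK : landauCount b μ = K + 1) : (2 * (K : ℝ) + 1) * b < μ := by
  by_contra hn
  have hsub : {n : ℕ | (2 * (n : ℝ) + 1) * b < μ} ⊆ (Finset.range K : Set ℕ) := by
    intro n hn'
    simp only [Set.mem_setOf_eq] at hn'
    rw [Finset.coe_range, Set.mem_Iio]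
    by_contra hk
    apply hn
    have : (K : ℝ) ≤ n := by exact_mod_cast not_lt.mp hk
    nlinarith
  have := Set.ncard_le_ncard hsub (Finset.finite_toSet _)
  rw [Set.ncard_coe_finset, Finset.card_range] at this
  have h2 : landauCount b μ = Set.ncard {n : ℕ | (2 * (n : ℝ) + 1) * b < μ} := rfl
  omega

theorem main_half {M : ℝ} (hM0 : 0 < M) (hM : ∀ t, |deriv Th t| ≤ M) {b lam R₁ R₂ ε : ℝ} (hb : 0 < b) (hlam : 0 < lam)
    (h1 : 0 < R₁) (h2 : 0 < R₂) (he : 0 < ε) (he2 : ε ≤ 1 / 2) (n : ℕ)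
    (hn : (2 * (n : ℝ) + 1) * b + 8 * M ^ 2 / (ε * min R₁ R₂) ^ 2 < lam) :
    (1 - ε) ^ 2 * (b * (R₁ * R₂) / (2 * π)) * (n + 1 : ℝ) ≤ (NNb b lam (rectR R₁ R₂) : ℝ) := by
  have hr : 0 < min R₁ R₂ := lt_min h1 h2
  have k : ∀ R, 0 < R → min R₁ R₂ ≤ R → (M / (ε * R / 2)) ^ 2 ≤ 4 * M ^ 2 / (ε * min R₁ R₂) ^ 2 := by
    intro R hR hle
    have : (M / (ε * R / 2)) ^ 2 = 4 * M ^ 2 / (ε * R) ^ 2 := by field_simp; norm_num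
    rw [this]
    gcongr
  have k1 := k R₁ h1 (min_le_left _ _)
  have k2 := k R₂ h2 (min_le_right _ _)
  have e : 8 * M ^ 2 / (ε * min R₁ R₂) ^ 2 = 4 * M ^ 2 / (ε * min R₁ R₂) ^ 2 + 4 * M ^ 2 / (ε * min R₁ R₂) ^ 2 := by ring
  have p1 := mul_pos he h1
  have p2 := mul_pos he h2
  have q1 : ε * R₁ ≤ 1 / 2 * R₁ := by gcongr
  have q2 : ε * R₂ ≤ 1 / 2 * R₂ := by gcongr
  have := step2 (b := b) (L := (1 - ε) * R₁) (s := (1 - ε) * R₂) (wx := ε * R₁ / 2) (wy := ε * R₂ / 2) (R₁ := R₁) (R₂ := R₂)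
    (lam := lam) hb (mul_pos (by linarith) h1) (by positivity) (by linarith) (by positivity) (by linarith) hM
    (by linarith) (by linarith) n (by linarith) hlam
  refine le_trans (le_of_eq ?_) this
  ring

/-- refined Colin de Verdière lower bound on a rectangle. -/
theorem landau_rectangle_lower_bound :
    ∃ C₀ > 0, ∀ b lam R₁ R₂ : ℝ, 0 < b → b < lam →
      1 ≤ Real.sqrt b * min R₁ R₂ →
      ∀ ε : ℝ, 0 < ε → ε ≤ 1 →
        (1 - ε) ^ 2 * (b * (R₁ * R₂) / (2 * π)) *
            (landauCount b (lam - C₀ / (ε * min R₁ R₂) ^ 2) : ℝ)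
          ≤ (NNb b lam (rectR R₁ R₂) : ℝ) := by
  obtain ⟨M, hM0, hM⟩ := Th_deriv_bound
  refine ⟨32 * M ^ 2, by positivity, ?_⟩
  intro b lam R₁ R₂ hb hlam hR ε he he1
  have hr : 0 < min R₁ R₂ := by
    by_contra h
    have := mul_nonpos_of_nonneg_of_nonpos (Real.sqrt_nonneg b) (not_lt.mp h)
    linarith
  have h1 : 0 < R₁ := hr.trans_le (min_le_left _ _)
  have h2 : 0 < R₂ := hr.trans_le (min_le_right _ _)
  have hl0 : 0 < lam := hb.trans hlam
  have hpi := Real.pi_pos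
  rcases hK : landauCount b (lam - 32 * M ^ 2 / (ε * min R₁ R₂) ^ 2) with _ | n
  · rw [Nat.cast_zero, mul_zero]; exact Nat.cast_nonneg _
  have hn := landau_top hb hK
  rw [Nat.cast_succ]
  rcases le_total ε (1 / 2) with h | h
  · refine main_half hM0 hM hb hl0 h1 h2 he h n ?_
    have : 8 * M ^ 2 / (ε * min R₁ R₂) ^ 2 ≤ 32 * M ^ 2 / (ε * min R₁ R₂) ^ 2 := by gcongr; norm_num
    linarith
  · have h3 := main_half hM0 hM hb hl0 h1 h2 (ε := 1 / 2) (by norm_num) le_rfl n (by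
      have e : 8 * M ^ 2 / (1 / 2 * min R₁ R₂) ^ 2 = 32 * M ^ 2 / (1 * min R₁ R₂) ^ 2 := by field_simp; norm_num
      have : 32 * M ^ 2 / (1 * min R₁ R₂) ^ 2 ≤ 32 * M ^ 2 / (ε * min R₁ R₂) ^ 2 := by gcongr
      rw [e]; linarith)
    refine le_trans ?_ h3
    have : (1 - ε) ^ 2 ≤ (1 - 1 / 2) ^ 2 := by nlinarith
    gcongr
end
end

section
/- For every b ∈ ℝ and every f ∈ C₀^∞((0,∞); ℂ): ∫₀^∞ ( (y - b)² |f(y)|² + y² |f'(y)|² ) dy ≥ b ∫₀^∞ |f(y)|² dy. (Equivalently, the fibered operator P_b(1) is bounded below by b.) -/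
open MeasureTheory Real Filter

noncomputable section

/-- the quadratic form of the fibered operator `P_b(1)` is bounded
below by `b` : `∫ ((y-b)²|f|² + y²|f'|²) dy ≥ b ∫ |f|² dy` for test functions on
`(0,∞)`. -/
theorem fiber_operator_lower_bound (b : ℝ) (f : ℝ → ℂ)
    (hf : ContDiff ℝ (⊤ : ℕ∞) f) (hsupp : HasCompactSupport f)
    (hpos : tsupport f ⊆ Set.Ioi (0 : ℝ)) :
    b * ∫ y in Set.Ioi (0 : ℝ), ‖f y‖ ^ 2 ≤
      ∫ y in Set.Ioi (0 : ℝ), ((y - b) ^ 2 * ‖f y‖ ^ 2 + y ^ 2 * ‖deriv f y‖ ^ 2) := by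
  have hne : (1 : WithTop ℕ∞) ≤ ((⊤ : ℕ∞) : WithTop ℕ∞) := by exact_mod_cast le_top
  have hf1 : ContDiff ℝ 1 f := hf.of_le hne
  have hd : Differentiable ℝ f := hf1.differentiable (by norm_num)
  have hc : Continuous f := hf.continuous
  have hc' : Continuous (deriv f) := hf1.continuous_deriv le_rfl
  have hs' : HasCompactSupport (deriv f) := hsupp.deriv
  have hsq : HasCompactSupport (fun y => ‖f y‖ ^ 2) :=
    hsupp.comp_left (g := fun z : ℂ => ‖z‖ ^ 2) (by simp)
  have hsq' : HasCompactSupport (fun y => ‖deriv f y‖ ^ 2) :=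
    hs'.comp_left (g := fun z : ℂ => ‖z‖ ^ 2) (by simp)
  set g : ℝ → ℝ := fun y => (y * (y - b + 1)) * ‖f y‖ ^ 2 with hg
  have hgs : HasCompactSupport g := hsq.mul_left
  have hgc : ContDiff ℝ 1 g := by
    have : ContDiff ℝ 1 (fun y => ‖f y‖ ^ 2) := hf1.norm_sq ℝ
    exact ContDiff.mul (by fun_prop) this
  have hgd : ∀ y, deriv g y = (2 * y - b + 1) * ‖f y‖ ^ 2
      + (y * (y - b + 1)) * (2 * inner ℝ (f y) (deriv f y)) := by
    intro y
    have h1 : HasDerivAt (fun y => ‖f y‖ ^ 2) (2 * inner ℝ (f y) (deriv f y)) y :=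
      (hd y).hasDerivAt.norm_sq
    have h2 : HasDerivAt (fun y : ℝ => y * (y - b + 1)) (1 * (y - b + 1) + y * 1) y :=
      (hasDerivAt_id' y).mul (((hasDerivAt_id' y).sub_const b).add_const 1)
    have h3 : deriv g y = _ := (h2.mul h1).deriv
    rw [h3]
    ring
  have hg0 : ∫ y in Set.Ioi (0 : ℝ), deriv g y = 0 := by
    rw [hgs.integral_Ioi_deriv_eq hgc 0]
    simp [hg]
  have hpt : ∀ y, b * ‖f y‖ ^ 2 - deriv g y
      ≤ (y - b) ^ 2 * ‖f y‖ ^ 2 + y ^ 2 * ‖deriv f y‖ ^ 2 := by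
    intro y
    have h := sq_nonneg ‖(y - b + 1) • f y + y • deriv f y‖
    rw [norm_add_sq_real, norm_smul, norm_smul, real_inner_smul_left, real_inner_smul_right,
      mul_pow, mul_pow, Real.norm_eq_abs, Real.norm_eq_abs, sq_abs, sq_abs] at h
    rw [hgd]
    nlinarith [h]
  have i1 : Integrable (fun y => b * ‖f y‖ ^ 2) :=
    Continuous.integrable_of_hasCompactSupport (by fun_prop) hsq.mul_left
  have i2 : Integrable (deriv g) :=
    (hgc.continuous_deriv le_rfl).integrable_of_hasCompactSupport hgs.deriv
  have i3 : Integrable (fun y => (y - b) ^ 2 * ‖f y‖ ^ 2 + y ^ 2 * ‖deriv f y‖ ^ 2) :=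
    Continuous.integrable_of_hasCompactSupport (by fun_prop)
      (HasCompactSupport.add hsq.mul_left hsq'.mul_left)
  have key := integral_mono (i1.sub i2).integrableOn i3.integrableOn
    (μ := volume.restrict (Set.Ioi (0 : ℝ))) hpt
  have e := integral_sub (μ := volume.restrict (Set.Ioi (0 : ℝ))) i1.integrableOn i2.integrableOn
  rw [hg0, sub_zero, integral_const_mul] at e
  rw [← e]
  exact key
end
end
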